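/- arXiv:1608.01915 — 2 statements merged into one kernel-verified Lean document; each statement's English description precedes it below -/
import Mathlib

section
/- There exists a universal constant C ∈ (0,∞) with the following property. Let q ∈ [2,∞), n ∈ ℕ, and let (X,‖·‖_X) and (Y,‖·‖_Y) be Banach spaces with dim(X)=n and m_q(Y)<∞. Let |·| be a Hilbertian norm on X, identifying X with ℝ^n. Then for every γ ∈ (0,∞) and every smooth compactly supported function f:ℝ^n→Y: (∫_{ℝ^n} ∫_0^∞ fint_{x+tB_X} ‖f(y) − Taylor¹_x(H_{γt²}f)(y)‖_Y^q / t^{q+1} dy dt dx)^{1/q} ≤ C·[ (m_q(Y)/√γ)·(fint_{B_X} |x|^q·‖x·∇f‖_{L_q(ℝ^n;Y)}^q dx)^{1/q} + m_q(Y)·√(γn)·fint_{S^{n−1}} ‖σ·∇f‖_{L_q(ℝ^n;Y)} dσ ]. -/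
open MeasureTheory Metric Set ENNReal

noncomputable section

universe u

/-- `m` is an upper bound for the martingale cotype `q` constant `𝔪_q(Y)` of `Y`. -/
def MartCotypeBound (q : ℝ) (Y : Type*) [NormedAddCommGroup Y] [NormedSpace ℝ Y]
    [CompleteSpace Y] (m : ℝ) : Prop :=
  ∀ (Ω : Type) [MeasurableSpace Ω] (μ : Measure Ω) [IsProbabilityMeasure μ]
    (ℱ : Filtration ℕ ‹MeasurableSpace Ω›) (M : ℕ → Ω → Y), Martingale M ℱ μ →
    ∀ B : ℝ≥0∞, (∀ k, ∫⁻ ω, (‖M k ω‖₊ : ℝ≥0∞) ^ q ∂μ ≤ B) →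
      ∑' k : ℕ, ∫⁻ ω, (‖M (k + 1) ω - M k ω‖₊ : ℝ≥0∞) ^ q ∂μ ≤ ENNReal.ofReal m ^ q * B

/-- `N` is a norm on the real vector space `V`. -/
def IsNorm {V : Type*} [AddCommGroup V] [Module ℝ V] (N : V → ℝ) : Prop :=
  (∀ x, N x = 0 → x = 0) ∧ (∀ (a : ℝ) (x : V), N (a • x) = |a| * N x) ∧
    (∀ x y : V, N (x + y) ≤ N x + N y)

/-- The heat kernel `h_t(x) = (4πt)^{-n/2} e^{-|x|²/(4t)}` on `ℝⁿ`. -/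
def heatKernel (n : ℕ) (t : ℝ) (x : EuclideanSpace ℝ (Fin n)) : ℝ :=
  (4 * Real.pi * t) ^ (-(n : ℝ) / 2) * Real.exp (-‖x‖ ^ 2 / (4 * t))

/-- The heat evolute `H_t f = h_t ∗ f`. -/
def heat {n : ℕ} {Y : Type*} [NormedAddCommGroup Y] [NormedSpace ℝ Y]
    (t : ℝ) (f : EuclideanSpace ℝ (Fin n) → Y) (x : EuclideanSpace ℝ (Fin n)) : Y :=
  ∫ z, heatKernel n t z • f (x - z)

/-- The first-order Taylor polynomial `Taylor¹_x(g)(y) = g(x) + (y-x)·∇g(x)`. -/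
def taylor1 {n : ℕ} {Y : Type*} [NormedAddCommGroup Y] [NormedSpace ℝ Y]
    (g : EuclideanSpace ℝ (Fin n) → Y) (x y : EuclideanSpace ℝ (Fin n)) : Y :=
  g x + ∑ j, (y - x) j • fderiv ℝ g x (EuclideanSpace.single j 1)

/-- The directional derivative `(z·∇)f = Σ_j z_j ∂_j f`. -/
def dirDeriv {n : ℕ} {Y : Type*} [NormedAddCommGroup Y] [NormedSpace ℝ Y]
    (z : EuclideanSpace ℝ (Fin n)) (f : EuclideanSpace ℝ (Fin n) → Y)
    (y : EuclideanSpace ℝ (Fin n)) : Y :=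
  ∑ j, z j • fderiv ℝ f y (EuclideanSpace.single j 1)

/-
Let `A_a F` be the average of `F` over Gaussian translations of variance `a²` in every direction,
so that `A_a` is the heat semigroup at time `a² / 2`. For scales `a_j` with `a_j² = 2 a_{j+1}²`, the
values of `A_{a_j} F` along a random walk with Gaussian steps of variance `a_{j+1}²` form a
martingale, because the averaging loses exactly the variance which the walk gains. Taking the mean
of its increments over the last step, martingale cotype bounds the square function
`∫ ‖A_a F - A_{√3 a} F‖_q^q da / a`.
Gaussian integration by parts bounds `a ∂_z` of such differences by the differences themselves, and
telescoping over geometric scales then bounds `a ∂_z A_a F` by `‖F‖_q` and `a⁻¹ (F - A_a F)` by the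
Gaussian mean of `w ↦ ‖w·∇F‖_q`, in the `L^q(da / a)` norm over the scales. The Taylor error splits
into `F - A_a F` and a second-order Taylor remainder, which falls under the first bound applied to
`z·∇F`. Polar coordinates compare the Gaussian mean with `√n` times the spherical mean.
-/

section IntegralInequalities

variable {α β : Type*} [MeasurableSpace α] [MeasurableSpace β] {q : ℝ}

lemma lintegral_rpow_le_of_weight (ν : Measure β) {f φ : β → ℝ≥0∞} (hf : Measurable f)
    (hφ : Measurable φ) (hfφ : ∀ᵐ w ∂ν, φ w = 0 → f w = 0) (hφ_top : ∀ᵐ w ∂ν, φ w ≠ ∞)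
    (hq : 1 ≤ q) :
    (∫⁻ w, f w ∂ν) ^ q ≤ (∫⁻ w, φ w ∂ν) ^ (q - 1) * ∫⁻ w, f w ^ q * (φ w / φ w ^ q) ∂ν := by
  have hq0 : 0 < q := by linarith
  have hdiv : Measurable fun w => f w / φ w := hf.div hφ
  -- Hölder's inequality for `f / φ` and `1` with respect to the measure `φ ν`
  have holder := eLpNorm'_le_eLpNorm'_mul_rpow_measure_univ one_pos hq
    hdiv.aestronglyMeasurable (μ := ν.withDensity φ)
  simp only [eLpNorm', enorm_eq_self, ENNReal.rpow_one, div_one,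
    withDensity_apply _ MeasurableSet.univ, Measure.restrict_univ,
    lintegral_withDensity_eq_lintegral_mul _ hφ hdiv,
    lintegral_withDensity_eq_lintegral_mul _ hφ (hdiv.pow_const q), Pi.mul_apply] at holder
  have cancel : ∫⁻ w, f w ∂ν = ∫⁻ w, φ w * (f w / φ w) ∂ν := by
    refine lintegral_congr_ae ?_
    filter_upwards [hfφ, hφ_top] with w h0 htop
    rw [ENNReal.mul_div_cancel' h0 fun h => absurd h htop]
  calc (∫⁻ w, f w ∂ν) ^ q
      ≤ ((∫⁻ w, φ w * (f w / φ w) ^ q ∂ν) ^ (1 / q) * (∫⁻ w, φ w ∂ν) ^ (1 - 1 / q)) ^ q := by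
        rw [cancel]; gcongr
    _ = (∫⁻ w, φ w ∂ν) ^ (q - 1) * ∫⁻ w, φ w * (f w / φ w) ^ q ∂ν := by
        rw [ENNReal.mul_rpow_of_nonneg _ _ hq0.le, ← ENNReal.rpow_mul, ← ENNReal.rpow_mul,
          one_div_mul_cancel hq0.ne', ENNReal.rpow_one, mul_comm, sub_mul,
          one_div_mul_cancel hq0.ne', one_mul]
    _ = _ := by
        congr 1
        refine lintegral_congr fun w => ?_
        rw [ENNReal.div_rpow_of_nonneg _ _ hq0.le, ENNReal.div_eq_inv_mul, ENNReal.div_eq_inv_mul]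
        ring

lemma ae_ae_eq_zero_of_lintegral_rpow_eq_zero (μ : Measure α) (ν : Measure β) [SFinite μ]
    [SFinite ν] {F : α → β → ℝ≥0∞} (hF : Measurable (Function.uncurry F)) (hq : 0 < q) :
    ∀ᵐ x ∂μ, ∀ᵐ w ∂ν, (∫⁻ x, F x w ^ q ∂μ) = 0 → F x w = 0 := by
  have hslice : Measurable fun w => ∫⁻ x, F x w ^ q ∂μ := (hF.pow_const q).lintegral_prod_left
  have hmeas : MeasurableSet {p : β × α | (∫⁻ x, F x p.1 ^ q ∂μ) = 0 → F p.2 p.1 = 0} :=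
    ((hslice.comp measurable_fst) (measurableSet_singleton 0)).imp
      ((hF.comp measurable_swap) (measurableSet_singleton 0))
  refine (Measure.ae_ae_comm (p := fun w x => (∫⁻ x, F x w ^ q ∂μ) = 0 → F x w = 0) hmeas).1 ?_
  refine Filter.Eventually.of_forall fun w => ?_
  by_cases hw : (∫⁻ x, F x w ^ q ∂μ) = 0
  · filter_upwards [(lintegral_eq_zero_iff ((hF.of_uncurry_right).pow_const q)).1 hw] with x hx _
    exact (ENNReal.rpow_eq_zero_iff_of_pos hq).1 hx
  · exact Filter.Eventually.of_forall fun x h => absurd h hw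

lemma eLpNorm'_lintegral_le (μ : Measure α) (ν : Measure β) [SFinite μ] [SFinite ν]
    {F : α → β → ℝ≥0∞} (hF : Measurable (Function.uncurry F)) (hq : 1 ≤ q) :
    eLpNorm' (fun x => ∫⁻ w, F x w ∂ν) q μ ≤ ∫⁻ w, eLpNorm' (fun x => F x w) q μ ∂ν := by
  have hq0 : 0 < q := by linarith
  set φ : β → ℝ≥0∞ := fun w => eLpNorm' (fun x => F x w) q μ
  have hφ_rpow (w) : φ w ^ q = ∫⁻ x, F x w ^ q ∂μ :=
    (lintegral_rpow_enorm_eq_rpow_eLpNorm' hq0).symm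
  have hφ : Measurable φ := (hF.pow_const q).lintegral_prod_left.pow_const _
  by_cases htop : ∫⁻ w, φ w ∂ν = ∞
  · exact htop ▸ le_top
  have weighted : ∀ᵐ x ∂μ, (∫⁻ w, F x w ∂ν) ^ q ≤
      (∫⁻ w, φ w ∂ν) ^ (q - 1) * ∫⁻ w, F x w ^ q * (φ w / φ w ^ q) ∂ν := by
    filter_upwards [ae_ae_eq_zero_of_lintegral_rpow_eq_zero μ ν hF hq0] with x hx
    refine lintegral_rpow_le_of_weight ν hF.of_uncurry_left hφ ?_
      ((ae_lt_top hφ htop).mono fun w => LT.lt.ne) hq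
    filter_upwards [hx] with w hw hφw
    exact hw (by rw [← hφ_rpow, hφw, ENNReal.zero_rpow_of_pos hq0])
  rw [← ENNReal.rpow_le_rpow_iff hq0, ← lintegral_rpow_enorm_eq_rpow_eLpNorm' hq0]
  calc ∫⁻ x, (∫⁻ w, F x w ∂ν) ^ q ∂μ
      ≤ ∫⁻ x, (∫⁻ w, φ w ∂ν) ^ (q - 1) * ∫⁻ w, F x w ^ q * (φ w / φ w ^ q) ∂ν ∂μ :=
        lintegral_mono_ae weighted
    _ = (∫⁻ w, φ w ∂ν) ^ (q - 1) * ∫⁻ w, φ w ^ q * (φ w / φ w ^ q) ∂ν := by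
        rw [lintegral_const_mul' _ _ (ENNReal.rpow_ne_top_of_nonneg (by linarith) htop),
          lintegral_lintegral_swap ((hF.pow_const q).mul
            ((hφ.comp measurable_snd).div ((hφ.comp measurable_snd).pow_const q))).aemeasurable]
        simp only [hφ_rpow, lintegral_mul_const _ (hF.of_uncurry_right.pow_const q)]
    _ ≤ (∫⁻ w, φ w ∂ν) ^ (q - 1) * ∫⁻ w, φ w ∂ν := by
        gcongr with w
        rw [← mul_div_assoc, mul_comm, mul_div_assoc]
        exact mul_le_of_le_one_right' ENNReal.div_self_le_one
    _ = (∫⁻ w, φ w ∂ν) ^ q := by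
        nth_rewrite 2 [← ENNReal.rpow_one (∫⁻ w, φ w ∂ν)]
        rw [← ENNReal.rpow_add_of_nonneg _ _ (by linarith) zero_le_one, sub_add_cancel]

lemma lintegral_rpow_le_lintegral_rpow (μ : Measure α) [IsProbabilityMeasure μ] {F : α → ℝ≥0∞}
    (hF : AEMeasurable F μ) (hq : 1 ≤ q) : (∫⁻ x, F x ∂μ) ^ q ≤ ∫⁻ x, F x ^ q ∂μ := by
  have hq0 : 0 < q := by linarith
  have exponent_le := eLpNorm'_le_eLpNorm'_of_exponent_le one_pos hq μ hF.aestronglyMeasurable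
  simp only [eLpNorm', enorm_eq_self, ENNReal.rpow_one, div_one] at exponent_le
  simpa only [one_div, ENNReal.le_rpow_inv_iff hq0] using exponent_le

variable {Y : Type*} [NormedAddCommGroup Y] [NormedSpace ℝ Y]

lemma enorm_integral_rpow_le (μ : Measure α) [IsProbabilityMeasure μ] {F : α → Y}
    (hF : AEStronglyMeasurable F μ) (hq : 1 ≤ q) : ‖∫ x, F x ∂μ‖ₑ ^ q ≤ ∫⁻ x, ‖F x‖ₑ ^ q ∂μ :=
  (ENNReal.rpow_le_rpow (enorm_integral_le_lintegral_enorm F) (by linarith)).trans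
    (lintegral_rpow_le_lintegral_rpow μ hF.enorm hq)

lemma eLpNorm'_integral_le (μ : Measure α) (ν : Measure β) [SFinite μ] [SFinite ν]
    {F : α → β → Y} (hF : Measurable fun z : α × β => ‖F z.1 z.2‖ₑ) (hq : 1 ≤ q) :
    eLpNorm' (fun x => ∫ w, F x w ∂ν) q μ ≤ ∫⁻ w, eLpNorm' (fun x => F x w) q μ ∂ν :=
  calc eLpNorm' (fun x => ∫ w, F x w ∂ν) q μ
      ≤ eLpNorm' (fun x => ∫⁻ w, ‖F x w‖ₑ ∂ν) q μ :=
        eLpNorm'_mono_enorm_ae (by linarith) <| .of_forall fun x => by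
          simpa only [enorm_eq_self] using enorm_integral_le_lintegral_enorm (F x)
    _ ≤ ∫⁻ w, eLpNorm' (fun x => ‖F x w‖ₑ) q μ ∂ν := eLpNorm'_lintegral_le μ ν hF hq
    _ = ∫⁻ w, eLpNorm' (fun x => F x w) q μ ∂ν := by simp only [eLpNorm'_enorm]

end IntegralInequalities

section Telescoping

variable {α : Type*} [MeasurableSpace α] {μ : Measure α} {q : ℝ}

lemma eLpNorm'_le_tsum_of_tendsto_zero {Y : Type*} [NormedAddCommGroup Y] {X : ℕ → α → Y}
    (hX : ∀ k, AEStronglyMeasurable (X k) μ)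
    (hX_lim : Filter.Tendsto (fun k => eLpNorm' (X k) q μ) Filter.atTop (nhds 0)) (hq : 1 ≤ q) :
    eLpNorm' (X 0) q μ ≤ ∑' k, eLpNorm' (fun x => X k x - X (k + 1) x) q μ := by
  have partial_sum (K : ℕ) : eLpNorm' (X 0) q μ ≤
      (∑ k ∈ Finset.range K, eLpNorm' (fun x => X k x - X (k + 1) x) q μ) +
        eLpNorm' (X K) q μ := by
    induction K with
    | zero => simp
    | succ K ih =>
      have triangle := eLpNorm'_add_le ((hX K).sub (hX (K + 1))) (hX (K + 1)) hq
      rw [sub_add_cancel] at triangle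
      rw [Finset.sum_range_succ, add_assoc]
      exact ih.trans (by gcongr; exact triangle)
  refine ge_of_tendsto' (x := Filter.atTop) (f := fun K =>
    (∑' k, eLpNorm' (fun x => X k x - X (k + 1) x) q μ) + eLpNorm' (X K) q μ) ?_ fun K =>
      (partial_sum K).trans (by gcongr; exact ENNReal.sum_le_tsum _)
  simpa only [add_zero] using tendsto_const_nhds.add hX_lim

lemma eLpNorm'_comp_add_right [AddGroup α] [MeasurableAdd α] [μ.IsAddRightInvariant]
    {ε : Type*} [ENorm ε] (F : α → ε) (h : α) :
    eLpNorm' (fun x => F (x + h)) q μ = eLpNorm' F q μ := by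
  simp only [eLpNorm']
  rw [lintegral_add_right_eq_self (fun x => ‖F x‖ₑ ^ q)]

lemma eLpNorm'_const_mul {B : α → ℝ≥0∞} (hB : Measurable B) (c : ℝ≥0∞) (hq : 0 < q) :
    eLpNorm' (fun u => c * B u) q μ = c * eLpNorm' B q μ := by
  simp only [eLpNorm', enorm_eq_self, ENNReal.mul_rpow_of_nonneg _ _ hq.le]
  rw [lintegral_const_mul _ (hB.pow_const q), ENNReal.mul_rpow_of_nonneg _ _ (by positivity),
    ← ENNReal.rpow_mul, mul_one_div_cancel hq.ne', ENNReal.rpow_one]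

lemma eLpNorm'_const_le [IsZeroOrProbabilityMeasure μ] (c : ℝ≥0∞) (hq : 0 < q) :
    eLpNorm' (fun _ : α => c) q μ ≤ c := by
  rw [eLpNorm'_const c hq, enorm_eq_self]
  exact mul_le_of_le_one_right' (ENNReal.rpow_le_one prob_le_one (by positivity))

lemma eLpNorm'_const_mul_comp_add [AddGroup α] [MeasurableAdd α] [μ.IsAddRightInvariant]
    {B : α → ℝ≥0∞} (hB : Measurable B) (c : ℝ≥0∞) (d : α) (hq : 0 < q) :
    eLpNorm' (fun u => c * B (u + d)) q μ = c * eLpNorm' B q μ := by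
  rw [eLpNorm'_const_mul (B := fun u => B (u + d)) (hB.comp (measurable_add_const d)) c hq,
    eLpNorm'_comp_add_right]

lemma eLpNorm'_le_tsum_mul_of_le_tsum_comp_add [AddGroup α] [MeasurableAdd α] [SFinite μ]
    [μ.IsAddRightInvariant] {A B : α → ℝ≥0∞} (hB : Measurable B) (c : ℕ → ℝ≥0∞) (d : ℕ → α)
    (hAB : ∀ u, A u ≤ ∑' k, c k * B (u + d k)) (hq : 1 ≤ q) :
    eLpNorm' A q μ ≤ (∑' k, c k) * eLpNorm' B q μ := by
  have hmeas : Measurable (Function.uncurry fun u k => c k * B (u + d k)) :=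
    measurable_from_prod_countable_left fun k =>
      (hB.comp (measurable_add_const (d k))).const_mul (c k)
  have minkowski := eLpNorm'_lintegral_le μ Measure.count hmeas hq
  simp only [lintegral_count] at minkowski
  calc eLpNorm' A q μ
      ≤ eLpNorm' (fun u => ∑' k, c k * B (u + d k)) q μ :=
        eLpNorm'_mono_enorm_ae (by linarith) (.of_forall hAB)
    _ ≤ ∑' k, eLpNorm' (fun u => c k * B (u + d k)) q μ := minkowski
    _ = (∑' k, c k) * eLpNorm' B q μ := by
        simp only [eLpNorm'_const_mul_comp_add hB _ _ (by linarith : 0 < q), ENNReal.tsum_mul_right]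

end Telescoping

section Translation

variable {E Y : Type*} [NormedAddCommGroup E] [NormedSpace ℝ E] [NormedAddCommGroup Y]
  [NormedSpace ℝ Y] [CompleteSpace Y] {F : E → Y}

lemma setIntegral_fderiv_segment (hF : ContDiff ℝ 1 F) (x h : E) :
    ∫ θ in Ioc (0 : ℝ) 1, fderiv ℝ F (x + θ • h) h = F (x + h) - F x := by
  have := hF.continuous_fderiv one_ne_zero
  have hderiv (θ : ℝ) : HasDerivAt (fun θ : ℝ => F (x + θ • h)) (fderiv ℝ F (x + θ • h) h) θ :=
    (hF.differentiable one_ne_zero _).hasFDerivAt.comp_hasDerivAt θ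
      (by simpa using ((hasDerivAt_id θ).smul_const h).const_add x)
  rw [← intervalIntegral.integral_of_le zero_le_one,
    intervalIntegral.integral_eq_sub_of_hasDerivAt (fun θ _ => hderiv θ)
      (Continuous.intervalIntegrable (by fun_prop) _ _), one_smul, zero_smul, add_zero]

variable [MeasurableSpace E] [BorelSpace E] {μ : Measure E} [SFinite μ] [μ.IsAddRightInvariant]
  {q : ℝ}

lemma eLpNorm'_translate_sub_le (hF : ContDiff ℝ 1 F) (h : E) (hq : 1 ≤ q) :
    eLpNorm' (fun x => F (x + h) - F x) q μ ≤ eLpNorm' (fun x => fderiv ℝ F x h) q μ := by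
  have := hF.continuous_fderiv one_ne_zero
  have hcont : Continuous fun z : E × ℝ => fderiv ℝ F (z.1 + z.2 • h) h := by fun_prop
  simp only [← setIntegral_fderiv_segment hF]
  refine (eLpNorm'_integral_le μ _ (F := fun x (θ : ℝ) => fderiv ℝ F (x + θ • h) h)
    hcont.enorm.measurable hq).trans ?_
  simp [eLpNorm'_comp_add_right (fun x => fderiv ℝ F x h)]

lemma eLpNorm'_taylor_remainder_le (hF : ContDiff ℝ 2 F) (h : E) (hq : 1 ≤ q) :
    eLpNorm' (fun x => F (x + h) - F x - fderiv ℝ F x h) q μ ≤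
      eLpNorm' (fun x => fderiv ℝ (fun y => fderiv ℝ F y h) x h) q μ := by
  have hF' : Continuous (fderiv ℝ F) := hF.continuous_fderiv two_ne_zero
  have hcont : Continuous fun z : E × ℝ => fderiv ℝ F (z.1 + z.2 • h) h - fderiv ℝ F z.1 h := by
    fun_prop
  have hF'_h : ContDiff ℝ 1 fun y => fderiv ℝ F y h :=
    (hF.fderiv_right (m := 1) (by norm_num)).clm_apply contDiff_const
  have integral_form (x : E) : F (x + h) - F x - fderiv ℝ F x h =
      ∫ θ in Ioc (0 : ℝ) 1, (fderiv ℝ F (x + θ • h) h - fderiv ℝ F x h) := by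
    rw [integral_sub (Continuous.integrableOn_Ioc (by fun_prop)) (integrable_const _),
      setIntegral_fderiv_segment (hF.of_le one_le_two)]
    simp
  have shift_le : ∀ θ ∈ Ioc (0 : ℝ) 1,
      eLpNorm' (fun x => fderiv ℝ F (x + θ • h) h - fderiv ℝ F x h) q μ ≤
        eLpNorm' (fun x => fderiv ℝ (fun y => fderiv ℝ F y h) x h) q μ := by
    refine fun θ hθ => (eLpNorm'_translate_sub_le hF'_h (θ • h) hq).trans <|
      eLpNorm'_mono_enorm_ae (by linarith) <| .of_forall fun x => ?_
    rw [map_smul, enorm_smul, Real.enorm_of_nonneg hθ.1.le]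
    exact mul_le_of_le_one_left' (ENNReal.ofReal_le_one.2 hθ.2)
  simp only [integral_form]
  refine (eLpNorm'_integral_le μ _ (F := fun x (θ : ℝ) => fderiv ℝ F (x + θ • h) h -
    fderiv ℝ F x h) hcont.enorm.measurable hq).trans ?_
  refine (setLIntegral_mono' measurableSet_Ioc shift_le).trans_eq ?_
  simp

end Translation

section Discretization

variable {φ : ℝ → ℝ≥0∞} {L : ℝ}

lemma setLIntegral_Ioc_sub_mul_eq_sum (φ : ℝ → ℝ≥0∞) (hL : 0 ≤ L) (a : ℝ) (K : ℕ) :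
    ∫⁻ u in Ioc (a - K * L) a, φ u =
      ∑ k ∈ Finset.range K, ∫⁻ u in Ioc (a - L) a, φ (u - k * L) := by
  induction K with
  | zero => simp
  | succ K ih =>
    have translate := (measurePreserving_sub_right volume (K * L)).setLIntegral_comp_preimage_emb
      (MeasurableEquiv.subRight (K * L)).measurableEmbedding φ
      (Ioc (a - (K + 1 : ℕ) * L) (a - K * L))
    rw [preimage_sub_const_Ioc, sub_add_cancel,
      show a - (K + 1 : ℕ) * L + K * L = a - L by push_cast; ring] at translate
    rw [Finset.sum_range_succ, ← ih, translate, ← lintegral_union measurableSet_Ioc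
      (Ioc_disjoint_Ioc_of_le le_rfl).symm, union_comm, Ioc_union_Ioc_eq_Ioc]
    · push_cast; linarith
    · nlinarith [K.cast_nonneg (α := ℝ)]

lemma lintegral_le_of_sum_scales_le (hL : 0 < L) (hφ : Measurable φ) {M : ℝ≥0∞}
    (hM : ∀ u, ∀ K : ℕ, ∑ k ∈ Finset.range K, φ (u - k * L) ≤ M) :
    ∫⁻ u, φ u ≤ ENNReal.ofReal L * M := by
  have window_le (a : ℝ) (K : ℕ) : ∫⁻ u in Ioc (a - K * L) a, φ u ≤ ENNReal.ofReal L * M := by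
    have hshift (k : ℕ) : Measurable fun u => φ (u - k * L) := hφ.comp (measurable_sub_const _)
    rw [setLIntegral_Ioc_sub_mul_eq_sum φ hL.le, ← lintegral_finsetSum _ fun k _ => hshift k]
    exact (lintegral_mono fun u => hM u K).trans_eq (by simp [mul_comm])
  have hmono : Monotone fun K : ℕ => Ioc (K * L - (2 * K : ℕ) * L) (K * L) := fun K K' hK =>
    have : (K : ℝ) ≤ K' := by exact_mod_cast hK
    Ioc_subset_Ioc (by push_cast; nlinarith) (by nlinarith)
  have hcover : ⋃ K : ℕ, Ioc (K * L - (2 * K : ℕ) * L) (K * L) = univ := by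
    refine eq_univ_of_forall fun u => mem_iUnion.2 ?_
    obtain ⟨K, hK⟩ := exists_nat_gt (|u| / L)
    have := abs_lt.1 ((div_lt_iff₀ hL).1 hK)
    exact ⟨K, by push_cast; linarith, this.2.le⟩
  rw [← setLIntegral_univ, ← hcover, setLIntegral_iUnion_of_directed _ hmono.directed_le]
  exact iSup_le fun K => window_le _ _

end Discretization

section Gaussian

open ProbabilityTheory

lemma lintegral_enorm_le_sqrt_integral_norm_sq {α V : Type*} [MeasurableSpace α]
    [NormedAddCommGroup V] {μ : Measure α} [IsProbabilityMeasure μ] {F : α → V}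
    (hF : MemLp F 2 μ) : ∫⁻ x, ‖F x‖ₑ ∂μ ≤ ENNReal.ofReal √(∫ x, ‖F x‖ ^ 2 ∂μ) := by
  rw [← eLpNorm_one_eq_lintegral_enorm]
  refine (eLpNorm_le_eLpNorm_of_exponent_le one_le_two hF.1).trans_eq ?_
  rw [hF.eLpNorm_eq_integral_rpow_norm two_ne_zero ofNat_ne_top, Real.sqrt_eq_rpow]
  simp

variable {E : Type*} [NormedAddCommGroup E] [InnerProductSpace ℝ E] [FiniteDimensional ℝ E]
  [MeasurableSpace E] [BorelSpace E]

instance isProbabilityMeasure_map_smul_stdGaussian (a : ℝ) :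
    IsProbabilityMeasure ((stdGaussian E).map fun w => a • w) :=
  Measure.isProbabilityMeasure_map (by fun_prop)

open scoped MeasureTheory in
lemma conv_map_smul_stdGaussian {a b c : ℝ} (habc : a ^ 2 + b ^ 2 = c ^ 2) :
    (stdGaussian E).map (fun w => a • w) ∗ (stdGaussian E).map (fun w => b • w) =
      (stdGaussian E).map (fun w => c • w) := by
  refine Measure.ext_of_charFun (funext fun ξ => ?_)
  simp only [charFun_conv, charFun_map_smul, charFun_stdGaussian, ← Complex.exp_add, norm_smul,
    Real.norm_eq_abs]
  norm_cast
  rw [mul_pow, mul_pow, mul_pow, sq_abs, sq_abs, sq_abs, ← habc]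
  ring_nf

lemma integral_inner_sq_stdGaussian (z : E) :
    ∫ w, (inner ℝ z w : ℝ) ^ 2 ∂(stdGaussian E) = ‖z‖ ^ 2 := by
  have hvar := variance_dual_stdGaussian (innerSL ℝ z)
  rw [variance_of_integral_eq_zero (by fun_prop) (integral_strongDual_stdGaussian _),
    innerSL_apply_norm] at hvar
  exact hvar

lemma lintegral_enorm_inner_stdGaussian_le (z : E) :
    ∫⁻ w, ‖(inner ℝ z w : ℝ)‖ₑ ∂(stdGaussian E) ≤ ‖z‖ₑ := by
  refine (lintegral_enorm_le_sqrt_integral_norm_sq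
    (IsGaussian.memLp_dual (stdGaussian E) (innerSL ℝ z) 2 ofNat_ne_top)).trans_eq ?_
  simp only [innerSL_apply_apply, Real.norm_eq_abs, sq_abs, integral_inner_sq_stdGaussian,
    Real.sqrt_sq (norm_nonneg z), ofReal_norm]

lemma lintegral_enorm_stdGaussian_le :
    ∫⁻ w, ‖w‖ₑ ∂(stdGaussian E) ≤ ENNReal.ofReal √(Module.finrank ℝ E) := by
  have second_moment : ∫ w, ‖w‖ ^ 2 ∂(stdGaussian E) = Module.finrank ℝ E := by
    simp_rw [← (stdOrthonormalBasis ℝ E).sum_sq_inner_right]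
    have integrable_inner_sq (z : E) : Integrable (fun w => (inner ℝ z w : ℝ) ^ 2)
        (stdGaussian E) :=
      (IsGaussian.memLp_dual (stdGaussian E) (innerSL ℝ z) 2 ofNat_ne_top).integrable_sq
    rw [integral_finsetSum _ fun i _ => integrable_inner_sq _]
    simp [integral_inner_sq_stdGaussian]
  exact second_moment ▸ lintegral_enorm_le_sqrt_integral_norm_sq IsGaussian.memLp_two_id

end Gaussian

section HeatKernel

open ProbabilityTheory

variable {n : ℕ} {t : ℝ}

local notation "𝔼" => EuclideanSpace ℝ (Fin n)

lemma heatKernel_pos (ht : 0 < t) (x : 𝔼) : 0 < heatKernel n t x := by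
  unfold heatKernel
  positivity

lemma contDiff_heatKernel {k : WithTop ℕ∞} : ContDiff ℝ k (heatKernel n t) := by
  unfold heatKernel
  have : ContDiff ℝ k fun x : 𝔼 => ‖x‖ ^ 2 := contDiff_norm_sq ℝ
  fun_prop

lemma integral_heatKernel (ht : 0 < t) : ∫ x : 𝔼, heatKernel n t x = 1 := by
  have exponent_eq (x : 𝔼) : -‖x‖ ^ 2 / (4 * t) = -(1 / (4 * t)) * ‖x‖ ^ 2 := by ring
  simp_rw [heatKernel, exponent_eq]
  rw [integral_const_mul, GaussianFourier.integral_rexp_neg_mul_sq_norm (by positivity),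
    finrank_euclideanSpace_fin, show Real.pi / (1 / (4 * t)) = 4 * Real.pi * t by field_simp,
    ← Real.rpow_add (by positivity), neg_div, neg_add_cancel, Real.rpow_zero]

lemma integrable_heatKernel (ht : 0 < t) : Integrable (heatKernel n t) := by
  by_contra h
  exact one_ne_zero ((integral_heatKernel (n := n) ht).symm.trans (integral_undef h))

lemma integral_withDensity_heatKernel {Y : Type*} [NormedAddCommGroup Y] [NormedSpace ℝ Y]
    (ht : 0 < t) (F : 𝔼 → Y) :
    ∫ w, F w ∂(volume.withDensity fun z => ENNReal.ofReal (heatKernel n t z)) =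
      ∫ z, heatKernel n t z • F z := by
  rw [integral_withDensity_eq_integral_toReal_smul
    (contDiff_heatKernel (k := 0)).continuous.measurable.ennreal_ofReal (by simp)]
  simp only [ENNReal.toReal_ofReal (heatKernel_pos ht _).le]

lemma charFun_withDensity_heatKernel (ht : 0 < t) (ξ : 𝔼) :
    charFun (volume.withDensity fun z => ENNReal.ofReal (heatKernel n t z)) ξ =
      Complex.exp (-t * ‖ξ‖ ^ 2) := by
  have integrand_eq (z : 𝔼) :
      heatKernel n t z • Complex.exp ((inner ℝ z ξ : ℝ) * Complex.I) =
        (((4 * Real.pi * t) ^ (-(n : ℝ) / 2) : ℝ) : ℂ) * Complex.exp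
          (-((1 / (4 * t) : ℝ) : ℂ) * ‖z‖ ^ 2 + Complex.I * (inner ℝ ξ z : ℝ)) := by
    rw [Complex.exp_add, real_inner_comm ξ z, Complex.real_smul, heatKernel, mul_comm Complex.I,
      ← mul_assoc]
    push_cast
    ring_nf
  have normalization : ((Real.pi : ℂ) / ((1 / (4 * t) : ℝ) : ℂ)) ^ ((n : ℂ) / 2) =
      (((4 * Real.pi * t) ^ ((n : ℝ) / 2) : ℝ) : ℂ) := by
    rw [Complex.ofReal_cpow (by positivity), ← Complex.ofReal_div,
      show Real.pi / (1 / (4 * t)) = 4 * Real.pi * t by field_simp]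
    push_cast
    rfl
  rw [charFun_apply, integral_withDensity_heatKernel ht]
  simp_rw [integrand_eq]
  rw [integral_const_mul, GaussianFourier.integral_cexp_neg_mul_sq_norm_add_of_euclideanSpace
    (by simpa using ht), Fintype.card_fin, normalization, ← mul_assoc, ← Complex.ofReal_mul,
    ← Real.rpow_add (by positivity), neg_div, neg_add_cancel, Real.rpow_zero, Complex.ofReal_one,
    one_mul, Complex.I_sq]
  congr 1
  have : (t : ℂ) ≠ 0 := by exact_mod_cast ht.ne'
  push_cast
  field_simp

lemma stdGaussian_eq_withDensity_heatKernel :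
    stdGaussian 𝔼 = volume.withDensity fun z => ENNReal.ofReal (heatKernel n (1 / 2) z) := by
  have : IsFiniteMeasure (volume.withDensity fun z => ENNReal.ofReal (heatKernel n (1 / 2) z)) :=
    isFiniteMeasure_withDensity_ofReal (integrable_heatKernel (by norm_num)).2
  refine Measure.ext_of_charFun (funext fun ξ => ?_)
  rw [charFun_stdGaussian, charFun_withDensity_heatKernel (by norm_num)]
  congr 1
  push_cast
  ring

lemma integral_stdGaussian_eq {Y : Type*} [NormedAddCommGroup Y] [NormedSpace ℝ Y] (F : 𝔼 → Y) :
    ∫ w, F w ∂(stdGaussian 𝔼) = ∫ z, heatKernel n (1 / 2) z • F z := by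
  rw [stdGaussian_eq_withDensity_heatKernel, integral_withDensity_heatKernel (by norm_num)]

lemma heatKernel_smul {a : ℝ} (ha : 0 < a) (ht : 0 < t) (x : 𝔼) :
    heatKernel n (a ^ 2 * t) (a • x) = (a ^ n)⁻¹ * heatKernel n t x := by
  have amplitude : (a ^ 2) ^ (-(n : ℝ) / 2) = (a ^ n)⁻¹ := by
    rw [← Real.rpow_natCast a 2, ← Real.rpow_mul ha.le, ← Real.rpow_natCast a n,
      ← Real.rpow_neg ha.le]
    congr 1
    push_cast
    ring
  have exponent : -(a * ‖x‖) ^ 2 / (4 * (a ^ 2 * t)) = -‖x‖ ^ 2 / (4 * t) := by field_simp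
  rw [heatKernel, heatKernel, norm_smul, Real.norm_of_nonneg ha.le, exponent,
    show 4 * Real.pi * (a ^ 2 * t) = a ^ 2 * (4 * Real.pi * t) by ring,
    Real.mul_rpow (by positivity) (by positivity), amplitude, mul_assoc]

end HeatKernel

section BoundedFunctions

/-- `F` is continuous and bounded: the unbundled counterpart of `BoundedContinuousFunction`. -/
structure IsBddContinuous {E Y : Type*} [TopologicalSpace E] [NormedAddCommGroup Y]
    (F : E → Y) : Prop where
  continuous : Continuous F
  bounded : ∃ C, ∀ x, ‖F x‖ ≤ C

/-- `F` is continuously differentiable, and bounded together with its derivative. -/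
structure IsBddC1 {E Y : Type*} [NormedAddCommGroup E] [NormedSpace ℝ E] [NormedAddCommGroup Y]
    [NormedSpace ℝ Y] (F : E → Y) : Prop where
  contDiff : ContDiff ℝ 1 F
  isBddContinuous : IsBddContinuous F
  isBddContinuous_fderiv : IsBddContinuous (fderiv ℝ F)

variable {E Y : Type*} [NormedAddCommGroup E] [NormedAddCommGroup Y] {F H : E → Y}

lemma IsBddContinuous.of_hasCompactSupport (hF : Continuous F) (hF_supp : HasCompactSupport F) :
    IsBddContinuous F :=
  ⟨hF, hF_supp.exists_bound_of_continuous hF⟩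

lemma IsBddContinuous.sub (hF : IsBddContinuous F) (hH : IsBddContinuous H) :
    IsBddContinuous fun x => F x - H x := by
  obtain ⟨C, hC⟩ := hF.bounded
  obtain ⟨D, hD⟩ := hH.bounded
  exact ⟨hF.continuous.sub hH.continuous, C + D,
    fun x => (norm_sub_le _ _).trans (add_le_add (hC x) (hD x))⟩

variable [NormedSpace ℝ E] [NormedSpace ℝ Y]

lemma IsBddContinuous.apply {F : E → E →L[ℝ] Y} (hF : IsBddContinuous F) (z : E) :
    IsBddContinuous fun y => F y z := by
  obtain ⟨C, hC⟩ := hF.bounded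
  have := hF.continuous
  exact ⟨by fun_prop, C * ‖z‖, fun x => ((F x).le_opNorm z).trans (by gcongr; exact hC x)⟩

lemma IsBddC1.of_hasCompactSupport (hF : ContDiff ℝ 1 F) (hF_supp : HasCompactSupport F) :
    IsBddC1 F :=
  ⟨hF, .of_hasCompactSupport hF.continuous hF_supp,
    .of_hasCompactSupport (hF.continuous_fderiv one_ne_zero) (hF_supp.fderiv ℝ)⟩

lemma IsBddC1.hasFDerivAt (hF : IsBddC1 F) (x : E) : HasFDerivAt F (fderiv ℝ F x) x :=
  (hF.contDiff.differentiable one_ne_zero x).hasFDerivAt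

lemma IsBddC1.apply {F : E → E →L[ℝ] Y} (hF : IsBddC1 F) (z : E) : IsBddC1 fun y => F y z := by
  refine ⟨hF.contDiff.clm_apply contDiff_const, hF.isBddContinuous.apply z, ?_⟩
  let eval := ContinuousLinearMap.apply ℝ Y z
  obtain ⟨C, hC⟩ := hF.isBddContinuous_fderiv.bounded
  rw [show fderiv ℝ (fun y => F y z) = fun y => eval.comp (fderiv ℝ F y) from
    funext fun y => (eval.hasFDerivAt.comp y (hF.hasFDerivAt y)).fderiv]
  exact ⟨continuous_const.clm_comp hF.isBddContinuous_fderiv.continuous, ‖eval‖ * C,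
    fun y => (eval.opNorm_comp_le _).trans (by gcongr; exact hC y)⟩

lemma IsBddC1.sub (hF : IsBddC1 F) (hH : IsBddC1 H) : IsBddC1 fun x => F x - H x := by
  refine ⟨hF.contDiff.sub hH.contDiff, hF.isBddContinuous.sub hH.isBddContinuous, ?_⟩
  rw [show fderiv ℝ (fun x => F x - H x) = fun x => fderiv ℝ F x - fderiv ℝ H x from
    funext fun x => ((hF.hasFDerivAt x).sub (hH.hasFDerivAt x)).fderiv]
  exact hF.isBddContinuous_fderiv.sub hH.isBddContinuous_fderiv

lemma IsBddC1.hasFDerivAt_comp_sub_smul (hF : IsBddC1 F) (x : E) (a : ℝ) (w : E) :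
    HasFDerivAt (fun w => F (x - a • w)) (-(a • fderiv ℝ F (x - a • w))) w := by
  have inner_deriv : HasFDerivAt (fun w : E => x - a • w) (-(a • .id ℝ E)) w :=
    ((hasFDerivAt_id w).const_smul a).const_sub x
  have chain := (hF.hasFDerivAt (x - a • w)).comp w inner_deriv
  rwa [ContinuousLinearMap.comp_neg, ContinuousLinearMap.comp_smul,
    ContinuousLinearMap.comp_id] at chain

lemma IsBddC1.comp_sub_smul (hF : IsBddC1 F) (x : E) (a : ℝ) :
    IsBddC1 fun w => F (x - a • w) := by
  obtain ⟨C, hC⟩ := hF.isBddContinuous.bounded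
  obtain ⟨D, hD⟩ := hF.isBddContinuous_fderiv.bounded
  have := hF.contDiff
  have := hF.isBddContinuous_fderiv.continuous
  have hF_contDiff : ContDiff ℝ 1 fun w => F (x - a • w) := by fun_prop
  refine ⟨hF_contDiff, ⟨hF_contDiff.continuous, C, fun w => hC _⟩, ?_⟩
  rw [show fderiv ℝ (fun w => F (x - a • w)) = fun w => -(a • fderiv ℝ F (x - a • w)) from
    funext fun w => (hF.hasFDerivAt_comp_sub_smul x a w).fderiv]
  exact ⟨by fun_prop, |a| * D, fun w => by
    rw [norm_neg, norm_smul, Real.norm_eq_abs]; gcongr; exact hD _⟩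

end BoundedFunctions

section GaussianAverage

open ProbabilityTheory

variable {E : Type*} [NormedAddCommGroup E] [InnerProductSpace ℝ E] [FiniteDimensional ℝ E]
  [MeasurableSpace E] [BorelSpace E] {Y : Type*} [NormedAddCommGroup Y] {F H : E → Y} {q : ℝ}

lemma IsBddContinuous.integrable_comp_sub_smul (hF : IsBddContinuous F) (a : ℝ) (x : E) :
    Integrable (fun w => F (x - a • w)) (stdGaussian E) := by
  obtain ⟨C, hC⟩ := hF.bounded
  have := hF.continuous
  exact .of_bound (Continuous.aestronglyMeasurable (by fun_prop)) C (.of_forall fun w => hC _)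

variable [NormedSpace ℝ Y]

/-- The average of `F` around each point over a centred Gaussian of covariance `a² I`. It is the
heat evolute of `F` at time `a² / 2`, see `heat_eq_gaussianAverage`. -/
def gaussianAverage (a : ℝ) (F : E → Y) (x : E) : Y := ∫ w, F (x - a • w) ∂(stdGaussian E)

lemma gaussianAverage_zero [CompleteSpace Y] : gaussianAverage 0 F = F := by
  ext x
  simp [gaussianAverage]

lemma gaussianAverage_sub (hF : IsBddContinuous F) (hH : IsBddContinuous H) (a : ℝ) (x : E) :
    gaussianAverage a (fun y => F y - H y) x = gaussianAverage a F x - gaussianAverage a H x :=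
  integral_sub (hF.integrable_comp_sub_smul a x) (hH.integrable_comp_sub_smul a x)

lemma continuous_gaussianAverage (hF : IsBddContinuous F) :
    Continuous fun p : ℝ × E => gaussianAverage p.1 F p.2 := by
  obtain ⟨C, hC⟩ := hF.bounded
  have := hF.continuous
  exact continuous_of_dominated (bound := fun _ => C)
    (fun p => Continuous.aestronglyMeasurable (by fun_prop)) (fun p => .of_forall fun w => hC _)
    (integrable_const C) (.of_forall fun w => by fun_prop)

lemma IsBddContinuous.gaussianAverage (hF : IsBddContinuous F) (a : ℝ) :
    IsBddContinuous (gaussianAverage a F) := by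
  obtain ⟨C, hC⟩ := hF.bounded
  refine ⟨(continuous_gaussianAverage hF).comp (Continuous.prodMk_right a), C, fun x => ?_⟩
  exact (norm_integral_le_of_norm_le_const (μ := stdGaussian E)
    (f := fun w => F (x - a • w)) (.of_forall fun w => hC _)).trans_eq (by simp)

open scoped MeasureTheory in
lemma gaussianAverage_gaussianAverage (hF : IsBddContinuous F) {a b c : ℝ}
    (habc : a ^ 2 + b ^ 2 = c ^ 2) :
    gaussianAverage a (gaussianAverage b F) = gaussianAverage c F := by
  ext x
  have := hF.continuous
  obtain ⟨C, hC⟩ := hF.bounded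
  have eq_integral_map (r : ℝ) {G : E → Y} (hG : Continuous G) (y : E) :
      gaussianAverage r G y = ∫ v, G (y - v) ∂((stdGaussian E).map fun w => r • w) := by
    rw [integral_map (by fun_prop) (Continuous.aestronglyMeasurable (by fun_prop))]
    rfl
  rw [eq_integral_map c hF.continuous, ← conv_map_smul_stdGaussian habc, Measure.conv,
    integral_map (by fun_prop) (Continuous.aestronglyMeasurable (by fun_prop)), integral_prod,
    eq_integral_map a (hF.gaussianAverage b).continuous]
  · simp only [eq_integral_map b hF.continuous, sub_sub]
  · exact .of_bound (Continuous.aestronglyMeasurable (by fun_prop)) C (.of_forall fun w => hC _)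

lemma hasFDerivAt_gaussianAverage (hF : IsBddC1 F) (a : ℝ) (x : E) :
    HasFDerivAt (gaussianAverage a F) (gaussianAverage a (fderiv ℝ F) x) x := by
  obtain ⟨C, hC⟩ := hF.isBddContinuous_fderiv.bounded
  have := hF.isBddContinuous.continuous
  have := hF.isBddContinuous_fderiv.continuous
  exact hasFDerivAt_integral_of_dominated_of_fderiv_le (𝕜 := ℝ) (bound := fun _ => C)
    (F' := fun x w => fderiv ℝ F (x - a • w)) Filter.univ_mem
    (.of_forall fun y => Continuous.aestronglyMeasurable (by fun_prop))
    (hF.isBddContinuous.integrable_comp_sub_smul a x)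
    (Continuous.aestronglyMeasurable (by fun_prop))
    (.of_forall fun w y _ => hC _) (integrable_const _)
    (.of_forall fun w y _ => (hasFDerivAt_comp_sub _).2 (hF.hasFDerivAt _))

lemma fderiv_gaussianAverage (hF : IsBddC1 F) (a : ℝ) :
    fderiv ℝ (gaussianAverage a F) = gaussianAverage a (fderiv ℝ F) :=
  funext fun x => (hasFDerivAt_gaussianAverage hF a x).fderiv

lemma fderiv_gaussianAverage_apply (hF : IsBddC1 F) (a : ℝ) (x z : E) :
    fderiv ℝ (gaussianAverage a F) x z = gaussianAverage a (fun y => fderiv ℝ F y z) x := by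
  rw [fderiv_gaussianAverage hF]
  exact ContinuousLinearMap.integral_apply
    (hF.isBddContinuous_fderiv.integrable_comp_sub_smul a x) z

lemma IsBddC1.gaussianAverage (hF : IsBddC1 F) (a : ℝ) : IsBddC1 (gaussianAverage a F) := by
  have hF' := fderiv_gaussianAverage hF a ▸ hF.isBddContinuous_fderiv.gaussianAverage a
  exact ⟨contDiff_one_iff_fderiv.2
    ⟨fun x => (hasFDerivAt_gaussianAverage hF a x).differentiableAt, hF'.continuous⟩,
    hF.isBddContinuous.gaussianAverage a, hF'⟩

lemma contDiff_two_gaussianAverage (hF : IsBddC1 F) (hF' : IsBddC1 (fderiv ℝ F)) (a : ℝ) :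
    ContDiff ℝ 2 (gaussianAverage a F) := by
  rw [show (2 : WithTop ℕ∞) = 1 + 1 by norm_num, contDiff_succ_iff_fderiv,
    fderiv_gaussianAverage hF]
  exact ⟨(hF.gaussianAverage a).contDiff.differentiable one_ne_zero, by simp,
    (hF'.gaussianAverage a).contDiff⟩

lemma eLpNorm'_gaussianAverage_sub_le [CompleteSpace Y] (hF : IsBddC1 F) (a b : ℝ) (hq : 1 ≤ q) :
    eLpNorm' (fun x => gaussianAverage a F x - gaussianAverage b F x) q volume ≤
      ‖b - a‖ₑ * ∫⁻ w, eLpNorm' (fun y => fderiv ℝ F y w) q volume ∂(stdGaussian E) := by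
  have := hF.isBddContinuous.continuous
  have translate_le (w : E) : eLpNorm' (fun x => F (x - a • w) - F (x - b • w)) q volume ≤
      ‖b - a‖ₑ * eLpNorm' (fun y => fderiv ℝ F y w) q volume := by
    rw [← eLpNorm'_comp_add_right _ (b • w)]
    calc eLpNorm' (fun x => F (x + b • w - a • w) - F (x + b • w - b • w)) q volume
        = eLpNorm' (fun x => F (x + (b - a) • w) - F x) q volume := by
          simp only [add_sub_cancel_right, add_sub_assoc, sub_smul]
      _ ≤ eLpNorm' (fun x => fderiv ℝ F x ((b - a) • w)) q volume :=
          eLpNorm'_translate_sub_le hF.contDiff _ hq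
      _ = ‖b - a‖ₑ * eLpNorm' (fun y => fderiv ℝ F y w) q volume := by
          simp only [map_smul]
          exact eLpNorm'_const_smul _ (by linarith)
  simp only [gaussianAverage, ← integral_sub (hF.isBddContinuous.integrable_comp_sub_smul a _)
    (hF.isBddContinuous.integrable_comp_sub_smul b _)]
  refine (eLpNorm'_integral_le volume (stdGaussian E)
    (F := fun x w => F (x - a • w) - F (x - b • w))
    (Continuous.measurable (by fun_prop)) hq).trans ?_
  rw [← lintegral_const_mul' _ _ enorm_ne_top]
  exact lintegral_mono translate_le

end GaussianAverage

section HeatSemigroup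

open ProbabilityTheory

variable {n : ℕ} {Y : Type*} [NormedAddCommGroup Y] [NormedSpace ℝ Y]

local notation "𝔼" => EuclideanSpace ℝ (Fin n)

variable {F : EuclideanSpace ℝ (Fin n) → Y}

lemma heat_eq_gaussianAverage {a : ℝ} (ha : 0 < a) (f : 𝔼 → Y) :
    heat (a ^ 2 / 2) f = gaussianAverage a f := by
  ext x
  have rescale := Measure.integral_comp_smul (volume : Measure 𝔼)
    (fun z => heatKernel n (a ^ 2 / 2) z • f (x - z)) a
  simp only [div_eq_mul_one_div (a ^ 2), heatKernel_smul ha one_half_pos, mul_smul,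
    integral_smul, finrank_euclideanSpace_fin, abs_of_pos (inv_pos.2 (pow_pos ha n))] at rescale
  rw [heat, gaussianAverage, integral_stdGaussian_eq, div_eq_mul_one_div]
  exact (smul_right_injective Y (inv_pos.2 (pow_pos ha n)).ne' rescale).symm

lemma fderiv_heatKernel_apply (t : ℝ) (w z : 𝔼) :
    fderiv ℝ (heatKernel n t) w z = -(1 / (2 * t)) * (inner ℝ z w : ℝ) * heatKernel n t w := by
  have exponent_deriv : HasFDerivAt (fun x : 𝔼 => -‖x‖ ^ 2 / (4 * t))
      ((4 * t)⁻¹ • -(2 • innerSL ℝ w : 𝔼 →L[ℝ] ℝ)) w := by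
    simp only [div_eq_inv_mul]
    exact (hasStrictFDerivAt_norm_sq w).hasFDerivAt.neg.const_mul _
  have kernel_deriv : fderiv ℝ (heatKernel n t) w = _ :=
    (exponent_deriv.exp.const_mul ((4 * Real.pi * t) ^ (-(n : ℝ) / 2))).fderiv
  rw [kernel_deriv, heatKernel, real_inner_comm w z]
  simp
  ring

lemma integral_fderiv_apply_stdGaussian (hF : IsBddC1 F) (z : 𝔼) :
    ∫ w, fderiv ℝ F w z ∂(stdGaussian 𝔼) = ∫ w, (inner ℝ z w : ℝ) • F w ∂(stdGaussian 𝔼) := by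
  obtain ⟨C, hC⟩ := hF.isBddContinuous.bounded
  obtain ⟨D, hD⟩ := (hF.isBddContinuous_fderiv.apply z).bounded
  have hF_meas := hF.isBddContinuous.continuous.aestronglyMeasurable (μ := volume)
  have kernel_integrable := integrable_heatKernel (n := n) one_half_pos
  have inner_integrable : Integrable fun w : 𝔼 => (inner ℝ z w : ℝ) * heatKernel n (1 / 2) w := by
    have h := (IsGaussian.memLp_dual (stdGaussian 𝔼) (innerSL ℝ z) 1 one_ne_top).integrable le_rfl
    rw [stdGaussian_eq_withDensity_heatKernel, integrable_withDensity_iff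
      (contDiff_heatKernel (k := 0)).continuous.measurable.ennreal_ofReal (by simp)] at h
    simpa only [toReal_ofReal (heatKernel_pos one_half_pos _).le, innerSL_apply_apply] using h
  have fderiv_kernel (w : 𝔼) : fderiv ℝ (heatKernel n (1 / 2)) w z =
      -((inner ℝ z w : ℝ) * heatKernel n (1 / 2) w) := by
    rw [fderiv_heatKernel_apply]
    ring
  have by_parts := integral_smul_fderiv_eq_neg_fderiv_smul_of_integrable (μ := (volume : Measure 𝔼))
    (f := heatKernel n (1 / 2)) (g := F) (v := z)
    (by simp only [fderiv_kernel]; exact inner_integrable.neg.smul_bdd C hF_meas (.of_forall hC))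
    (kernel_integrable.smul_bdd D
      (hF.isBddContinuous_fderiv.apply z).continuous.aestronglyMeasurable (.of_forall hD))
    (kernel_integrable.smul_bdd C hF_meas (.of_forall hC))
    (fun w _ => contDiff_heatKernel.differentiable one_ne_zero w)
    (fun w _ => (hF.hasFDerivAt w).differentiableAt)
  rw [integral_stdGaussian_eq, integral_stdGaussian_eq, by_parts, ← integral_neg]
  simp only [fderiv_kernel, smul_smul, neg_smul, neg_neg, mul_comm]

lemma smul_gaussianAverage_fderiv_apply (hF : IsBddC1 F) (a : ℝ) (x z : 𝔼) :
    a • gaussianAverage a (fun y => fderiv ℝ F y z) x =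
      -∫ w, (inner ℝ z w : ℝ) • F (x - a • w) ∂(stdGaussian 𝔼) := by
  rw [← integral_fderiv_apply_stdGaussian (hF.comp_sub_smul x a), gaussianAverage, ← integral_smul,
    ← integral_neg]
  simp [(hF.hasFDerivAt_comp_sub_smul x a _).fderiv]

lemma eLpNorm'_gaussianAverage_fderiv_apply_le (hF : IsBddC1 F) {a q : ℝ} (ha : 0 < a)
    (hq : 1 ≤ q) (z : 𝔼) :
    eLpNorm' (gaussianAverage a fun y => fderiv ℝ F y z) q volume ≤
      ENNReal.ofReal (‖z‖ / a) * eLpNorm' F q volume := by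
  have hq0 : 0 < q := by linarith
  have := hF.isBddContinuous.continuous
  have minkowski := eLpNorm'_integral_le volume (stdGaussian 𝔼)
    (F := fun x w => (inner ℝ z w : ℝ) • F (x - a • w)) (Continuous.measurable (by fun_prop)) hq
  have slice (w : 𝔼) : eLpNorm' (fun x => (inner ℝ z w : ℝ) • F (x - a • w)) q volume =
      ‖(inner ℝ z w : ℝ)‖ₑ * eLpNorm' F q volume := by
    simp only [sub_eq_add_neg, ← eLpNorm'_comp_add_right F (-(a • w))]
    exact eLpNorm'_const_smul _ hq0
  have average_eq : (gaussianAverage a fun y => fderiv ℝ F y z) =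
      (-a⁻¹) • fun x => ∫ w, (inner ℝ z w : ℝ) • F (x - a • w) ∂(stdGaussian 𝔼) := by
    ext x
    rw [Pi.smul_apply, neg_smul, ← smul_neg, ← smul_gaussianAverage_fderiv_apply hF,
      inv_smul_smul₀ ha.ne']
  rw [average_eq, eLpNorm'_const_smul _ hq0, enorm_neg, Real.enorm_of_nonneg (by positivity),
    div_eq_inv_mul, ofReal_mul (by positivity), mul_assoc, ofReal_norm]
  gcongr
  refine minkowski.trans ?_
  simp only [slice]
  rw [lintegral_mul_const _ (Continuous.measurable (by fun_prop))]
  gcongr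
  exact lintegral_enorm_inner_stdGaussian_le z

end HeatSemigroup

section ConditionalExpectation

open ProbabilityTheory

variable {Ω α β Y : Type*} {m mΩ : MeasurableSpace Ω} [MeasurableSpace α] [MeasurableSpace β]
  {μ : Measure Ω} [IsProbabilityMeasure μ] {Z : Ω → α} {W : Ω → β}

lemma map_restrict_prodMk_eq_prod_of_indep (hm : m ≤ mΩ) (hZ : Measurable[m] Z)
    (hW : Measurable W) (hW_indep : Indep m (MeasurableSpace.comap W inferInstance) μ) {s : Set Ω}
    (hs : MeasurableSet[m] s) :
    (μ.restrict s).map (fun ω => (Z ω, W ω)) = ((μ.restrict s).map Z).prod (μ.map W) := by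
  have hZ' : Measurable Z := hZ.mono hm le_rfl
  have := Measure.isProbabilityMeasure_map (μ := μ) hW.aemeasurable
  refine (Measure.prod_eq fun A B hA hB => ?_).symm
  rw [Measure.map_apply (hZ'.prodMk hW) (hA.prod hB), Measure.map_apply hZ' hA,
    Measure.map_apply hW hB, Measure.restrict_apply (hZ'.prodMk hW (hA.prod hB)),
    Measure.restrict_apply (hZ' hA), mk_preimage_prod, inter_right_comm]
  exact (Indep_iff _ _ μ).1 hW_indep _ _ ((hZ hA).inter hs) ⟨B, hB, rfl⟩

variable [NormedAddCommGroup Y] [NormedSpace ℝ Y] [CompleteSpace Y]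

lemma condExp_comp_prodMk_of_indep (hm : m ≤ mΩ) (hZ : Measurable[m] Z) (hW : Measurable W)
    (hW_indep : Indep m (MeasurableSpace.comap W inferInstance) μ) {φ : α × β → Y}
    (hφ : StronglyMeasurable φ) (hφ_int : Integrable (fun ω => φ (Z ω, W ω)) μ) :
    μ[fun ω => φ (Z ω, W ω) | m] =ᵐ[μ] fun ω => ∫ w, φ (Z ω, w) ∂(μ.map W) := by
  have hZ' : Measurable Z := hZ.mono hm le_rfl
  have := Measure.isProbabilityMeasure_map (μ := μ) hW.aemeasurable
  have hφ_prod {s : Set Ω} (hs : MeasurableSet[m] s) :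
      Integrable φ (((μ.restrict s).map Z).prod (μ.map W)) := by
    rw [← map_restrict_prodMk_eq_prod_of_indep hm hZ hW hW_indep hs,
      integrable_map_measure hφ.aestronglyMeasurable (hZ'.prodMk hW).aemeasurable]
    exact hφ_int.restrict
  have hψ : StronglyMeasurable fun z => ∫ w, φ (z, w) ∂(μ.map W) := hφ.integral_prod_right'
  have hψ_int : Integrable (fun ω => ∫ w, φ (Z ω, w) ∂(μ.map W)) μ := by
    have := (hφ_prod .univ).integral_prod_left
    rw [Measure.restrict_univ] at this
    exact this.comp_measurable hZ'
  refine (ae_eq_condExp_of_forall_setIntegral_eq hm hφ_int (fun _ _ _ => hψ_int.integrableOn)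
    (fun s hs _ => ?_) (hψ.comp_measurable hZ).aestronglyMeasurable).symm
  rw [← integral_map (μ := μ.restrict s) hZ'.aemeasurable hψ.aestronglyMeasurable,
    ← integral_prod φ (hφ_prod hs), ← map_restrict_prodMk_eq_prod_of_indep hm hZ hW hW_indep hs,
    integral_map (hZ'.prodMk hW).aemeasurable hφ.aestronglyMeasurable]

end ConditionalExpectation

section HeatMartingale

open ProbabilityTheory

/-- The random walk with the independent Gaussian steps `a (i + 1) • ω (i + 1)`. -/
def gaussianWalk {E : Type*} [AddCommGroup E] [Module ℝ E] (a : ℕ → ℝ) (j : ℕ)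
    (ω : ℕ → E) : E :=
  ∑ i ∈ Finset.range j, a (i + 1) • ω (i + 1)

lemma gaussianWalk_succ {E : Type*} [AddCommGroup E] [Module ℝ E] (a : ℕ → ℝ) (j : ℕ)
    (ω : ℕ → E) :
    gaussianWalk a (j + 1) ω = gaussianWalk a j ω + a (j + 1) • ω (j + 1) :=
  Finset.sum_range_succ _ _

/-- The law of a sequence of independent standard Gaussian vectors. -/
def gaussianSequence (E : Type*) [NormedAddCommGroup E] [InnerProductSpace ℝ E]
    [FiniteDimensional ℝ E] [MeasurableSpace E] : Measure (ℕ → E) :=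
  Measure.infinitePi fun _ => stdGaussian E

variable {E : Type*} [NormedAddCommGroup E] [InnerProductSpace ℝ E] [FiniteDimensional ℝ E]
  [MeasurableSpace E] [BorelSpace E] {a : ℕ → ℝ}

instance : IsProbabilityMeasure (gaussianSequence E) := by
  unfold gaussianSequence
  infer_instance

lemma map_eval_gaussianSequence (i : ℕ) :
    (gaussianSequence E).map (fun ω => ω i) = stdGaussian E :=
  Measure.infinitePi_map_eval _ i

lemma stronglyMeasurable_eval (i : ℕ) : StronglyMeasurable fun ω : ℕ → E => ω i :=
  (measurable_pi_apply i).stronglyMeasurable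

variable (E) in
/-- The filtration on sequences whose `j`-th σ-algebra is generated by the entries up to `j`. -/
def coordinateFiltration : Filtration ℕ (inferInstance : MeasurableSpace (ℕ → E)) :=
  Filtration.natural (fun i ω => ω i) stronglyMeasurable_eval

lemma indep_coordinateFiltration (j : ℕ) :
    Indep (coordinateFiltration E j)
      (MeasurableSpace.comap (fun ω : ℕ → E => ω (j + 1)) inferInstance) (gaussianSequence E) :=
  ((iIndepFun_infinitePi (X := fun _ => id)
    fun _ => measurable_id).indep_comap_natural_of_lt stronglyMeasurable_eval j.lt_succ_self).symm

lemma measurable_gaussianWalk_coordinateFiltration (a : ℕ → ℝ) (j : ℕ) :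
    Measurable[coordinateFiltration E j] (gaussianWalk a j : (ℕ → E) → E) := by
  refine Finset.measurable_sum _ fun i hi => Measurable.const_smul ?_ (a (i + 1))
  have adapted := Filtration.stronglyAdapted_natural
    (stronglyMeasurable_eval (E := E)) (i + 1)
  exact adapted.measurable.mono
    ((coordinateFiltration E).mono (Finset.mem_range.1 hi)) le_rfl

lemma measurable_gaussianWalk (a : ℕ → ℝ) (j : ℕ) :
    Measurable (gaussianWalk a j : (ℕ → E) → E) :=
  (measurable_gaussianWalk_coordinateFiltration a j).mono ((coordinateFiltration E).le j) le_rfl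

open scoped MeasureTheory in
lemma map_gaussianWalk_succ (a : ℕ → ℝ) (j : ℕ) :
    (gaussianSequence E).map (gaussianWalk a (j + 1)) =
      ((gaussianSequence E).map (gaussianWalk a j)) ∗
        ((stdGaussian E).map fun w => a (j + 1) • w) := by
  have step_indep : IndepFun (gaussianWalk a j) (fun ω : ℕ → E => a (j + 1) • ω (j + 1))
      (gaussianSequence E) := by
    rw [IndepFun_iff_Indep]
    exact indep_of_indep_of_le_left
      (indep_of_indep_of_le_right (indep_coordinateFiltration j)
        ((comap_measurable _).const_smul (a (j + 1))).comap_le)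
      (measurable_gaussianWalk_coordinateFiltration a j).comap_le
  have step_law : (gaussianSequence E).map (fun ω : ℕ → E => a (j + 1) • ω (j + 1)) =
      (stdGaussian E).map fun w => a (j + 1) • w := by
    rw [← map_eval_gaussianSequence (j + 1)]
    exact (Measure.map_map (measurable_const_smul _) (measurable_pi_apply _)).symm
  rw [← step_law, ← step_indep.map_add_eq_map_conv_map (measurable_gaussianWalk a j)
    (by fun_prop), show gaussianWalk a (j + 1) = _ from funext (gaussianWalk_succ a j)]
  rfl

open scoped MeasureTheory in
lemma map_gaussianWalk_conv_map_smul (ha : ∀ j, a j ^ 2 = 2 * a (j + 1) ^ 2) (j : ℕ) :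
    ((gaussianSequence E).map (gaussianWalk a j)) ∗ ((stdGaussian E).map fun w => a j • w) =
      (stdGaussian E).map fun w => a 0 • w := by
  induction j with
  | zero =>
    have walk_zero : gaussianWalk a 0 = fun _ : ℕ → E => (0 : E) := by ext; simp [gaussianWalk]
    rw [walk_zero, Measure.map_const, measure_univ, one_smul, Measure.dirac_zero_conv]
  | succ j ih =>
    rw [map_gaussianWalk_succ, Measure.conv_assoc,
      conv_map_smul_stdGaussian (c := a j) (by linarith [ha j]), ih]

variable {Y : Type*} [NormedAddCommGroup Y] [NormedSpace ℝ Y] {F : E → Y} {q : ℝ}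

/-- The Gaussian averages of `F` along the random walk started at `x`. When `a j ^ 2` halves at each
step, the averaging loses exactly the variance which the walk gains, so that this is a martingale,
see `martingale_heatMartingale`. -/
def heatMartingale (F : E → Y) (a : ℕ → ℝ) (x : E) (j : ℕ) (ω : ℕ → E) : Y :=
  gaussianAverage (a j) F (x - gaussianWalk a j ω)

lemma stronglyMeasurable_heatMartingale (hF : IsBddContinuous F) (a : ℕ → ℝ)
    (x : E) (j : ℕ) : StronglyMeasurable[coordinateFiltration E j] (heatMartingale F a x j) := by
  have := (hF.gaussianAverage (a j)).continuous
  exact (show Continuous fun s => gaussianAverage (a j) F (x - s) by fun_prop)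
    |>.comp_stronglyMeasurable (measurable_gaussianWalk_coordinateFiltration a j).stronglyMeasurable

lemma integrable_heatMartingale (hF : IsBddContinuous F) (a : ℕ → ℝ)
    (x : E) (j : ℕ) : Integrable (heatMartingale F a x j) (gaussianSequence E) := by
  obtain ⟨C, hC⟩ := (hF.gaussianAverage (a j)).bounded
  exact .of_bound ((stronglyMeasurable_heatMartingale hF a x j).mono
    ((coordinateFiltration E).le j)).aestronglyMeasurable C (.of_forall fun ω => hC _)

lemma martingale_heatMartingale [CompleteSpace Y] (hF : IsBddContinuous F)
    (ha : ∀ j, a j ^ 2 = 2 * a (j + 1) ^ 2) (x : E) :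
    Martingale (heatMartingale F a x) (coordinateFiltration E) (gaussianSequence E) := by
  refine martingale_nat (stronglyMeasurable_heatMartingale hF a x)
    (integrable_heatMartingale hF a x) fun j => ?_
  have := (hF.gaussianAverage (a (j + 1))).continuous
  have succ_eq : heatMartingale F a x (j + 1) = fun ω =>
      gaussianAverage (a (j + 1)) F (x - gaussianWalk a j ω - a (j + 1) • ω (j + 1)) :=
    funext fun ω => by rw [heatMartingale, gaussianWalk_succ, sub_sub]
  have condExp_succ := condExp_comp_prodMk_of_indep ((coordinateFiltration E).le j)
    (measurable_gaussianWalk_coordinateFiltration a j) (measurable_pi_apply (j + 1))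
    (indep_coordinateFiltration j)
    (φ := fun p => gaussianAverage (a (j + 1)) F (x - p.1 - a (j + 1) • p.2))
    (Continuous.stronglyMeasurable (by fun_prop))
    (succ_eq ▸ integrable_heatMartingale hF a x (j + 1))
  rw [map_eval_gaussianSequence, ← succ_eq] at condExp_succ
  refine .trans (.of_eq (funext fun ω => ?_)) condExp_succ.symm
  rw [heatMartingale, ← gaussianAverage_gaussianAverage hF (a := a (j + 1)) (b := a (j + 1))
    (by linarith [ha j])]
  rfl

open scoped MeasureTheory in
lemma lintegral_enorm_heatMartingale_rpow_le (hF : IsBddContinuous F)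
    (ha : ∀ j, a j ^ 2 = 2 * a (j + 1) ^ 2) (hq : 1 ≤ q) (x : E) (j : ℕ) :
    ∫⁻ ω, ‖heatMartingale F a x j ω‖ₑ ^ q ∂(gaussianSequence E) ≤
      ∫⁻ w, ‖F (x - a 0 • w)‖ₑ ^ q ∂(stdGaussian E) := by
  have := hF.continuous
  have := Measure.isProbabilityMeasure_map (μ := gaussianSequence E)
    (measurable_gaussianWalk a j).aemeasurable
  have F_meas (y : E) : Measurable fun s => ‖F (y - s)‖ₑ ^ q :=
    (Continuous.measurable (by fun_prop)).pow_const q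
  have F_meas₂ : Measurable fun s : E =>
      ∫⁻ t, ‖F (x - (s + t))‖ₑ ^ q ∂((stdGaussian E).map fun w => a j • w) :=
    ((F_meas x).comp measurable_add).lintegral_prod_right'
  calc ∫⁻ ω, ‖heatMartingale F a x j ω‖ₑ ^ q ∂(gaussianSequence E)
      ≤ ∫⁻ ω, ∫⁻ w, ‖F (x - gaussianWalk a j ω - a j • w)‖ₑ ^ q ∂(stdGaussian E)
          ∂(gaussianSequence E) :=
        lintegral_mono fun ω =>
          enorm_integral_rpow_le _ (Continuous.aestronglyMeasurable (by fun_prop)) hq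
    _ = ∫⁻ ω, ∫⁻ t, ‖F (x - (gaussianWalk a j ω + t))‖ₑ ^ q
          ∂((stdGaussian E).map fun w => a j • w) ∂(gaussianSequence E) := by
        simp only [← sub_sub, lintegral_map (F_meas _) (measurable_const_smul (a j))]
    _ = ∫⁻ t, ‖F (x - t)‖ₑ ^ q ∂(((gaussianSequence E).map (gaussianWalk a j)) ∗
          ((stdGaussian E).map fun w => a j • w)) := by
        rw [Measure.lintegral_conv (F_meas x), lintegral_map F_meas₂ (measurable_gaussianWalk a j)]
    _ = ∫⁻ w, ‖F (x - a 0 • w)‖ₑ ^ q ∂(stdGaussian E) := by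
        rw [map_gaussianWalk_conv_map_smul ha, lintegral_map (F_meas x) (by fun_prop)]

lemma gaussianAverage_sub_gaussianAverage_sqrt_three [CompleteSpace Y] (hF : IsBddContinuous F)
    {b c : ℝ} (hbc : b ^ 2 = 2 * c ^ 2) (y : E) :
    gaussianAverage c F y - gaussianAverage (√3 * c) F y =
      ∫ w, (gaussianAverage c F y - gaussianAverage b F (y + c • w)) ∂(stdGaussian E) := by
  have variance_eq : (-c) ^ 2 + b ^ 2 = (√3 * c) ^ 2 := by
    rw [hbc, mul_pow, Real.sq_sqrt (by norm_num)]; ring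
  have avg_integrable : Integrable (fun w => gaussianAverage b F (y + c • w)) (stdGaussian E) := by
    simpa using (hF.gaussianAverage b).integrable_comp_sub_smul (-c) y
  rw [integral_sub (integrable_const _) avg_integrable,
    ← gaussianAverage_gaussianAverage hF variance_eq]
  simp [gaussianAverage]

lemma measurable_enorm_heatMartingale_increment (hF : IsBddContinuous F) (a : ℕ → ℝ) (j : ℕ) :
    Measurable fun p : E × (ℕ → E) =>
      ‖heatMartingale F a p.1 (j + 1) p.2 - heatMartingale F a p.1 j p.2‖ₑ ^ q := by
  have avg_cont (i : ℕ) := (hF.gaussianAverage (a i)).continuous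
  have avg_meas (i : ℕ) :
      StronglyMeasurable fun p : E × (ℕ → E) => heatMartingale F a p.1 i p.2 :=
    (avg_cont i).stronglyMeasurable.comp_measurable
      (measurable_fst.sub ((measurable_gaussianWalk a i).comp measurable_snd))
  exact ((avg_meas (j + 1)).sub (avg_meas j)).enorm.pow_const q

lemma lintegral_enorm_heatMartingale_increment (F : E → Y) (a : ℕ → ℝ) (j : ℕ) (ω : ℕ → E) :
    ∫⁻ x, ‖heatMartingale F a x (j + 1) ω - heatMartingale F a x j ω‖ₑ ^ q =
      ∫⁻ y, ‖gaussianAverage (a (j + 1)) F y -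
        gaussianAverage (a j) F (y + a (j + 1) • ω (j + 1))‖ₑ ^ q := by
  rw [← lintegral_sub_right_eq_self (fun y => ‖gaussianAverage (a (j + 1)) F y -
    gaussianAverage (a j) F (y + a (j + 1) • ω (j + 1))‖ₑ ^ q) (gaussianWalk a (j + 1) ω)]
  simp only [heatMartingale, gaussianWalk_succ, sub_add_eq_sub_sub, sub_add_cancel]

lemma eLpNorm'_gaussianAverage_sub_rpow_le_heatMartingale [CompleteSpace Y]
    (hF : IsBddContinuous F) (ha : ∀ j, a j ^ 2 = 2 * a (j + 1) ^ 2) (hq : 1 ≤ q) (j : ℕ) :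
    eLpNorm' (fun y => gaussianAverage (a (j + 1)) F y - gaussianAverage (√3 * a (j + 1)) F y)
        q volume ^ q ≤
      ∫⁻ x, ∫⁻ ω, ‖heatMartingale F a x (j + 1) ω - heatMartingale F a x j ω‖ₑ ^ q
        ∂(gaussianSequence E) := by
  have avg_cont (i : ℕ) := (hF.gaussianAverage (a i)).continuous
  have increment_cont : Continuous fun p : E × E =>
      gaussianAverage (a (j + 1)) F p.1 - gaussianAverage (a j) F (p.1 + a (j + 1) • p.2) := by
    have := avg_cont j
    have := avg_cont (j + 1)
    fun_prop
  have increment_meas := increment_cont.enorm.measurable.pow_const q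
  have increment_meas' := increment_meas.lintegral_prod_left' (μ := volume)
  rw [← lintegral_rpow_enorm_eq_rpow_eLpNorm' (by linarith)]
  calc ∫⁻ y, ‖gaussianAverage (a (j + 1)) F y - gaussianAverage (√3 * a (j + 1)) F y‖ₑ ^ q
      ≤ ∫⁻ y, ∫⁻ w, ‖gaussianAverage (a (j + 1)) F y -
          gaussianAverage (a j) F (y + a (j + 1) • w)‖ₑ ^ q ∂(stdGaussian E) := by
        gcongr with y
        rw [gaussianAverage_sub_gaussianAverage_sqrt_three hF (ha j)]
        exact enorm_integral_rpow_le _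
          (increment_cont.comp (Continuous.prodMk_right y)).aestronglyMeasurable hq
    _ = ∫⁻ w, ∫⁻ y, ‖gaussianAverage (a (j + 1)) F y -
          gaussianAverage (a j) F (y + a (j + 1) • w)‖ₑ ^ q ∂volume ∂(stdGaussian E) :=
        lintegral_lintegral_swap increment_meas.aemeasurable
    _ = ∫⁻ ω, ∫⁻ x, ‖heatMartingale F a x (j + 1) ω - heatMartingale F a x j ω‖ₑ ^ q
          ∂volume ∂(gaussianSequence E) := by
        rw [← map_eval_gaussianSequence (j + 1),
          lintegral_map increment_meas' (measurable_pi_apply _)]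
        simp only [lintegral_enorm_heatMartingale_increment]
    _ = ∫⁻ x, ∫⁻ ω, ‖heatMartingale F a x (j + 1) ω - heatMartingale F a x j ω‖ₑ ^ q
          ∂(gaussianSequence E) :=
        (lintegral_lintegral_swap
          (measurable_enorm_heatMartingale_increment hF a j).aemeasurable).symm

end HeatMartingale

section MartingaleCotype

open ProbabilityTheory

variable {E : Type} [NormedAddCommGroup E] [InnerProductSpace ℝ E] [FiniteDimensional ℝ E]
  [MeasurableSpace E] [BorelSpace E] {Y : Type*} [NormedAddCommGroup Y] [NormedSpace ℝ Y]
  [CompleteSpace Y] {F : E → Y} {q m : ℝ} {a : ℕ → ℝ}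

lemma MartCotypeBound.tsum_eLpNorm'_gaussianAverage_sub_le (hm : MartCotypeBound q Y m)
    (hF : IsBddContinuous F) (ha : ∀ j, a j ^ 2 = 2 * a (j + 1) ^ 2) (hq : 1 ≤ q) :
    ∑' j, eLpNorm' (fun x => gaussianAverage (a (j + 1)) F x -
        gaussianAverage (√3 * a (j + 1)) F x) q volume ^ q ≤
      ENNReal.ofReal m ^ q * eLpNorm' F q volume ^ q := by
  have hq0 : 0 < q := by linarith
  have := hF.continuous
  have translate_meas : Measurable fun p : E × E => ‖F (p.1 - a 0 • p.2)‖ₑ ^ q :=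
    (Continuous.measurable (by fun_prop)).pow_const q
  calc ∑' j, eLpNorm' (fun x => gaussianAverage (a (j + 1)) F x -
        gaussianAverage (√3 * a (j + 1)) F x) q volume ^ q
      ≤ ∑' j, ∫⁻ x, ∫⁻ ω, ‖heatMartingale F a x (j + 1) ω - heatMartingale F a x j ω‖ₑ ^ q
          ∂(gaussianSequence E) :=
        ENNReal.tsum_le_tsum (eLpNorm'_gaussianAverage_sub_rpow_le_heatMartingale hF ha hq)
    _ = ∫⁻ x, ∑' j, ∫⁻ ω, ‖heatMartingale F a x (j + 1) ω - heatMartingale F a x j ω‖ₑ ^ q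
          ∂(gaussianSequence E) :=
        (lintegral_tsum fun j => (measurable_enorm_heatMartingale_increment hF a
          j).lintegral_prod_right'.aemeasurable).symm
    _ ≤ ∫⁻ x, ENNReal.ofReal m ^ q * ∫⁻ w, ‖F (x - a 0 • w)‖ₑ ^ q ∂(stdGaussian E) :=
        lintegral_mono fun x => hm _ _ _ _ (martingale_heatMartingale hF ha x) _
          (lintegral_enorm_heatMartingale_rpow_le hF ha hq x)
    _ = ENNReal.ofReal m ^ q * ∫⁻ w, ∫⁻ x, ‖F (x - a 0 • w)‖ₑ ^ q ∂volume ∂(stdGaussian E) := by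
        rw [lintegral_const_mul' _ _ (ENNReal.rpow_ne_top_of_nonneg hq0.le ENNReal.ofReal_ne_top),
          lintegral_lintegral_swap translate_meas.aemeasurable]
    _ = ENNReal.ofReal m ^ q * eLpNorm' F q volume ^ q := by
        simp only [lintegral_sub_right_eq_self (fun x => ‖F x‖ₑ ^ q), lintegral_const,
          measure_univ, mul_one, lintegral_rpow_enorm_eq_rpow_eLpNorm' hq0]

end MartingaleCotype

section LogScale

variable {q : ℝ} {A B : ℝ → ℝ≥0∞}

/-- The `L^q` norm of `A` on the scales `(0, ∞)` with respect to `dt / t`, in the variable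
`u = log t`. -/
def logScaleNorm (q : ℝ) (A : ℝ → ℝ≥0∞) : ℝ≥0∞ := eLpNorm' (fun u => A (Real.exp u)) q volume

lemma logScaleNorm_le_of_le_tsum (hB : Measurable B) (c : ℕ → ℝ≥0∞) {r : ℕ → ℝ}
    (hr : ∀ k, 0 < r k) (hAB : ∀ a, 0 < a → A a ≤ ∑' k, c k * B (a * r k)) (hq : 1 ≤ q) :
    logScaleNorm q A ≤ (∑' k, c k) * logScaleNorm q B := by
  refine eLpNorm'_le_tsum_mul_of_le_tsum_comp_add (hB.comp Real.measurable_exp) c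
    (fun k => Real.log (r k)) (fun u => ?_) hq
  simpa only [Function.comp_apply, Real.exp_add, Real.exp_log (hr _)] using hAB _ (Real.exp_pos u)

lemma logScaleNorm_const_mul_comp_mul {s : ℝ} (hA : Measurable A) (c : ℝ≥0∞) (hs : 0 < s)
    (hq : 0 < q) : logScaleNorm q (fun t => c * A (s * t)) = c * logScaleNorm q A := by
  have shift := eLpNorm'_const_mul_comp_add (μ := volume) (hA.comp Real.measurable_exp) c
    (Real.log s) hq
  simpa only [logScaleNorm, Function.comp_def, Real.exp_add, Real.exp_log hs, mul_comm s]
    using shift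

lemma tsum_ofReal_sqrt_two_div_pow_le : ∑' k : ℕ, ENNReal.ofReal (√2 / √2 ^ k) ≤ 5 := by
  have one_lt : 1 < √2 := by rw [Real.lt_sqrt] <;> norm_num
  have ratio_lt : (√2)⁻¹ < 1 := inv_lt_one_of_one_lt₀ one_lt
  have geometric : HasSum (fun k : ℕ => √2 / √2 ^ k) (√2 / (1 - (√2)⁻¹)) := by
    simpa only [inv_pow, ← div_eq_mul_inv] using
      (hasSum_geometric_of_lt_one (by positivity) ratio_lt).mul_left √2
  rw [← ENNReal.ofReal_tsum_of_nonneg (fun k => by positivity) geometric.summable,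
    geometric.tsum_eq, show (5 : ℝ≥0∞) = ENNReal.ofReal 5 by simp]
  refine ENNReal.ofReal_le_ofReal ?_
  have sq_sqrt : √2 ^ 2 = 2 := Real.sq_sqrt (by norm_num)
  have sqrt_le : √2 ≤ 1.42 := by rw [Real.sqrt_le_left (by norm_num)]; norm_num
  have inv_eq : (√2)⁻¹ = √2 / 2 := by field_simp; linarith
  rw [inv_eq, div_le_iff₀ (by linarith)]
  linarith

lemma tendsto_zero_of_le_ofReal_div_sqrt_two_pow {X : ℕ → ℝ≥0∞} {c : ℝ} {M : ℝ≥0∞} (hM : M ≠ ∞)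
    (hX : ∀ k, X k ≤ ENNReal.ofReal (c / √2 ^ k) * M) :
    Filter.Tendsto X Filter.atTop (nhds 0) := by
  have one_lt : 1 < √2 := by rw [Real.lt_sqrt] <;> norm_num
  have ratio_tendsto : Filter.Tendsto (fun k : ℕ => c / √2 ^ k) Filter.atTop (nhds 0) :=
    tendsto_const_nhds.div_atTop (tendsto_pow_atTop_atTop_of_one_lt one_lt)
  have bound_tendsto := ENNReal.Tendsto.mul_const (ENNReal.tendsto_ofReal ratio_tendsto) (.inr hM)
  rw [ENNReal.ofReal_zero, zero_mul] at bound_tendsto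
  exact tendsto_of_tendsto_of_tendsto_of_le_of_le tendsto_const_nhds bound_tendsto
    (fun _ => zero_le) hX

lemma sqrt_two_pow_mul_eq (a : ℝ) (k : ℕ) : √2 ^ k * a = √2 * (a * (√2 ^ k / √2)) := by
  field_simp

lemma sqrt_two_pow_succ_mul_eq (a : ℝ) (k : ℕ) : √2 ^ (k + 1) * a = 2 * (a * (√2 ^ k / √2)) := by
  rw [pow_succ', mul_assoc, sqrt_two_pow_mul_eq, ← mul_assoc, Real.mul_self_sqrt (by norm_num)]

lemma abs_sqrt_sq_add_sq_sub_le {a b : ℝ} (hb : 0 < b) : |√(b ^ 2 + a ^ 2) - b| ≤ a ^ 2 / b := by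
  have le_sqrt : b ≤ √(b ^ 2 + a ^ 2) := Real.le_sqrt_of_sq_le (by nlinarith)
  have sqrt_le : √(b ^ 2 + a ^ 2) ≤ b + a ^ 2 / b := by
    rw [Real.sqrt_le_left (by positivity), add_sq, mul_assoc, mul_div_cancel₀ _ hb.ne']
    nlinarith [sq_nonneg (a ^ 2 / b), sq_nonneg a]
  rw [abs_of_nonneg (sub_nonneg.2 le_sqrt)]
  linarith

end LogScale

section GaussianIncrement

open ProbabilityTheory

lemma measurable_eLpNorm'_of_measurable_enorm {α T ε : Type*} [MeasurableSpace α]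
    [MeasurableSpace T] [ENorm ε] {q : ℝ} {G : T → α → ε} (μ : Measure α) [SFinite μ]
    (hG : Measurable fun p : T × α => ‖G p.1 p.2‖ₑ) : Measurable fun t => eLpNorm' (G t) q μ :=
  ((hG.pow_const q).lintegral_prod_right').pow_const _

variable {E : Type*} [NormedAddCommGroup E] [InnerProductSpace ℝ E] [FiniteDimensional ℝ E]
  [MeasurableSpace E] [BorelSpace E] {Y : Type*} [NormedAddCommGroup Y] [NormedSpace ℝ Y]
  {F : E → Y} {q a b c d s : ℝ}

/-- The `L^q` distance between the Gaussian averages of `F` at the scales `a` and `r * a`. -/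
def gaussianIncrement (q r : ℝ) (F : E → Y) (a : ℝ) : ℝ≥0∞ :=
  eLpNorm' (fun x => gaussianAverage a F x - gaussianAverage (r * a) F x) q volume

/-- The `L^q` norm of the derivative of `F` in a standard Gaussian direction, averaged over the
direction. -/
def gaussianGradNorm (q : ℝ) (F : E → Y) : ℝ≥0∞ :=
  ∫⁻ w, eLpNorm' (fun y => fderiv ℝ F y w) q volume ∂(stdGaussian E)

/-- The Gaussian increment of the derivative of `F` in a standard Gaussian direction, averaged over
the direction. -/
def gaussianGradIncrement (q r : ℝ) (F : E → Y) (a : ℝ) : ℝ≥0∞ :=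
  ∫⁻ w, gaussianIncrement q r (fun y => fderiv ℝ F y w) a ∂(stdGaussian E)

lemma measurable_gaussianIncrement (hF : IsBddContinuous F) (r : ℝ) :
    Measurable (gaussianIncrement q r F) := by
  have avg_cont := continuous_gaussianAverage hF
  have increment_cont : Continuous fun p : ℝ × E =>
      gaussianAverage p.1 F p.2 - gaussianAverage (r * p.1) F p.2 :=
    avg_cont.sub (avg_cont.comp (by fun_prop : Continuous fun p : ℝ × E => (r * p.1, p.2)))
  exact measurable_eLpNorm'_of_measurable_enorm volume increment_cont.enorm.measurable

lemma gaussianAverage_sub_eq_gaussianAverage_increment (hF : IsBddContinuous F)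
    (hc : s ^ 2 + b ^ 2 = c ^ 2) (hd : s ^ 2 + 3 * b ^ 2 = d ^ 2) (x : E) :
    gaussianAverage c F x - gaussianAverage d F x =
      gaussianAverage s (fun y => gaussianAverage b F y - gaussianAverage (√3 * b) F y) x := by
  rw [gaussianAverage_sub (hF.gaussianAverage _) (hF.gaussianAverage _),
    gaussianAverage_gaussianAverage hF hc, gaussianAverage_gaussianAverage hF (c := d)]
  rw [mul_pow, Real.sq_sqrt (by norm_num), hd]

lemma measurable_gaussianIncrement_fderiv_apply (hF : IsBddC1 F) (r : ℝ) :
    Measurable fun p : ℝ × E => gaussianIncrement q r (fun y => fderiv ℝ F y p.2) p.1 := by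
  have avg_cont := continuous_gaussianAverage hF.isBddContinuous_fderiv
  have increment_cont : Continuous fun p : (ℝ × E) × E =>
      gaussianAverage p.1.1 (fun y => fderiv ℝ F y p.1.2) p.2 -
        gaussianAverage (r * p.1.1) (fun y => fderiv ℝ F y p.1.2) p.2 := by
    simp only [← fderiv_gaussianAverage_apply hF, fderiv_gaussianAverage hF]
    have left_cont := avg_cont.comp
      (by fun_prop : Continuous fun p : (ℝ × E) × E => (p.1.1, p.2))
    have right_cont := avg_cont.comp
      (by fun_prop : Continuous fun p : (ℝ × E) × E => (r * p.1.1, p.2))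
    simp only [Function.comp_def] at left_cont right_cont
    fun_prop
  exact measurable_eLpNorm'_of_measurable_enorm volume increment_cont.enorm.measurable

lemma measurable_gaussianGradIncrement (hF : IsBddC1 F) (r : ℝ) :
    Measurable (gaussianGradIncrement q r F) :=
  (measurable_gaussianIncrement_fderiv_apply hF r).lintegral_prod_right'

lemma fderiv_gaussianAverage_sub_apply (hF : IsBddC1 F) (b c : ℝ) (z y : E) :
    fderiv ℝ (fun y => gaussianAverage b F y - gaussianAverage c F y) y z =
      gaussianAverage b (fun y => fderiv ℝ F y z) y -
        gaussianAverage c (fun y => fderiv ℝ F y z) y := by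
  rw [fderiv_fun_sub ((hF.gaussianAverage b).hasFDerivAt y).differentiableAt
    ((hF.gaussianAverage c).hasFDerivAt y).differentiableAt,
    sub_apply, fderiv_gaussianAverage_apply hF, fderiv_gaussianAverage_apply hF]

end GaussianIncrement

section SquareFunction

open ProbabilityTheory

variable {E : Type} [NormedAddCommGroup E] [InnerProductSpace ℝ E] [FiniteDimensional ℝ E]
  [MeasurableSpace E] [BorelSpace E] {Y : Type*} [NormedAddCommGroup Y] [NormedSpace ℝ Y]
  [CompleteSpace Y] {F : E → Y} {q m : ℝ}

lemma MartCotypeBound.logScaleNorm_gaussianIncrement_le (hm : MartCotypeBound q Y m)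
    (hF : IsBddContinuous F) (hq : 1 ≤ q) :
    logScaleNorm q (gaussianIncrement q √3 F) ≤ ENNReal.ofReal m * eLpNorm' F q volume := by
  have hq0 : 0 < q := by linarith
  -- the scales at which the Gaussian variance halves at each step
  let L := Real.log 2 / 2
  have exp_two_L : Real.exp (2 * L) = 2 := by
    rw [mul_div_cancel₀ _ two_ne_zero, Real.exp_log two_pos]
  have L_le_one : L ≤ 1 := by have := Real.log_two_lt_d9; simp only [L]; linarith
  have sum_scales_le (u : ℝ) (K : ℕ) :
      ∑ k ∈ Finset.range K, gaussianIncrement q √3 F (Real.exp (u - k * L)) ^ q ≤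
        ENNReal.ofReal m ^ q * eLpNorm' F q volume ^ q := by
    let a : ℕ → ℝ := fun j => Real.exp (u + L - j * L)
    have sq_a (j : ℕ) : a j ^ 2 = 2 * a (j + 1) ^ 2 := by
      have two_mul_exp (v : ℝ) : 2 * Real.exp v = Real.exp (2 * L + v) := by
        rw [Real.exp_add, exp_two_L]
      simp only [a, ← Real.exp_nat_mul, two_mul_exp]
      push_cast
      ring_nf
    have a_succ (k : ℕ) : a (k + 1) = Real.exp (u - k * L) := by
      simp only [a]
      push_cast
      ring_nf
    simp only [← a_succ]
    exact (ENNReal.sum_le_tsum _).trans (hm.tsum_eLpNorm'_gaussianAverage_sub_le hF sq_a hq)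
  have lintegral_le := lintegral_le_of_sum_scales_le (by positivity : 0 < L)
    (((measurable_gaussianIncrement hF √3).comp Real.measurable_exp).pow_const q) sum_scales_le
  rw [← ENNReal.rpow_le_rpow_iff hq0, logScaleNorm, ← lintegral_rpow_enorm_eq_rpow_eLpNorm' hq0,
    ENNReal.mul_rpow_of_nonneg _ _ hq0.le]
  exact lintegral_le.trans (mul_le_of_le_one_left' (ENNReal.ofReal_le_one.2 L_le_one))

lemma MartCotypeBound.logScaleNorm_gaussianGradIncrement_le (hm : MartCotypeBound q Y m)
    (hF : IsBddC1 F) (hq : 1 ≤ q) :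
    logScaleNorm q (gaussianGradIncrement q √3 F) ≤ ENNReal.ofReal m * gaussianGradNorm q F := by
  have increment_meas := (measurable_gaussianIncrement_fderiv_apply (q := q) hF √3).comp
    (by fun_prop : Measurable fun p : ℝ × E => (Real.exp p.1, p.2))
  simp only [Function.comp_def] at increment_meas
  have increment_le (w : E) : logScaleNorm q (gaussianIncrement q √3 fun y => fderiv ℝ F y w) ≤
      ENNReal.ofReal m * eLpNorm' (fun y => fderiv ℝ F y w) q volume :=
    hm.logScaleNorm_gaussianIncrement_le (hF.isBddContinuous_fderiv.apply w) hq
  calc logScaleNorm q (gaussianGradIncrement q √3 F)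
    _ ≤ ∫⁻ w, logScaleNorm q (gaussianIncrement q √3 fun y => fderiv ℝ F y w) ∂(stdGaussian E) :=
      eLpNorm'_lintegral_le volume _ increment_meas hq
    _ ≤ ∫⁻ w, ENNReal.ofReal m * eLpNorm' (fun y => fderiv ℝ F y w) q volume ∂(stdGaussian E) :=
      lintegral_mono fun w => increment_le w
    _ = ENNReal.ofReal m * gaussianGradNorm q F :=
      lintegral_const_mul' _ _ ENNReal.ofReal_ne_top

end SquareFunction

section HeatGradient

variable {n : ℕ} {Y : Type*} [NormedAddCommGroup Y] [NormedSpace ℝ Y]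
  {F : EuclideanSpace ℝ (Fin n) → Y} {q a b m : ℝ}

local notation "𝔼" => EuclideanSpace ℝ (Fin n)

lemma eLpNorm'_gaussianAverage_fderiv_apply_sub_le (hF : IsBddC1 F) (hb : 0 < b) (hq : 1 ≤ q)
    (z : 𝔼) :
    eLpNorm' (fun x => gaussianAverage (√2 * b) (fun y => fderiv ℝ F y z) x -
        gaussianAverage (2 * b) (fun y => fderiv ℝ F y z) x) q volume ≤
      ENNReal.ofReal (‖z‖ / b) * gaussianIncrement q √3 F b := by
  have sq_sqrt : √2 ^ 2 = 2 := Real.sq_sqrt (by norm_num)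
  have increment_bdd := (hF.gaussianAverage b).sub (hF.gaussianAverage (√3 * b))
  have bound := eLpNorm'_gaussianAverage_fderiv_apply_le increment_bdd hb hq z
  simp only [fderiv_gaussianAverage_sub_apply hF] at bound
  simpa only [gaussianIncrement,
    gaussianAverage_sub_eq_gaussianAverage_increment (hF.isBddContinuous_fderiv.apply z)
    (by rw [mul_pow, sq_sqrt]; ring : b ^ 2 + b ^ 2 = (√2 * b) ^ 2)
    (by ring : b ^ 2 + 3 * b ^ 2 = (2 * b) ^ 2)] using bound

lemma ofReal_mul_eLpNorm'_gaussianAverage_fderiv_apply_le (hF : IsBddC1 F)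
    (hF_fin : eLpNorm' F q volume ≠ ∞) (ha : 0 < a) (hq : 1 ≤ q) (z : 𝔼) :
    ENNReal.ofReal a * eLpNorm' (gaussianAverage a fun y => fderiv ℝ F y z) q volume ≤
      ∑' k : ℕ, ENNReal.ofReal ‖z‖ * ENNReal.ofReal (√2 / √2 ^ k) *
        gaussianIncrement q √3 F (a * (√2 ^ k / √2)) := by
  let X (k : ℕ) : 𝔼 → Y := gaussianAverage (√2 ^ k * a) fun y => fderiv ℝ F y z
  have X_meas (k : ℕ) : AEStronglyMeasurable (X k) volume :=
    ((hF.isBddContinuous_fderiv.apply z).gaussianAverage _).continuous.aestronglyMeasurable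
  have X_lim : Filter.Tendsto (fun k => eLpNorm' (X k) q volume) Filter.atTop (nhds 0) := by
    refine tendsto_zero_of_le_ofReal_div_sqrt_two_pow (c := ‖z‖ / a) hF_fin fun k => ?_
    rw [div_div, mul_comm a]
    exact eLpNorm'_gaussianAverage_fderiv_apply_le hF (by positivity) hq z
  have X_sub_le (k : ℕ) : eLpNorm' (fun x => X k x - X (k + 1) x) q volume ≤
      ENNReal.ofReal (‖z‖ / (a * (√2 ^ k / √2))) *
        gaussianIncrement q √3 F (a * (√2 ^ k / √2)) := by
    simp only [X, sqrt_two_pow_mul_eq a k, sqrt_two_pow_succ_mul_eq]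
    exact eLpNorm'_gaussianAverage_fderiv_apply_sub_le hF (by positivity) hq z
  have weight_eq (k : ℕ) : ENNReal.ofReal ‖z‖ * ENNReal.ofReal (√2 / √2 ^ k) =
      ENNReal.ofReal a * ENNReal.ofReal (‖z‖ / (a * (√2 ^ k / √2))) := by
    rw [← ENNReal.ofReal_mul (norm_nonneg z), ← ENNReal.ofReal_mul ha.le]
    congr 1
    field_simp
  have telescope := eLpNorm'_le_tsum_of_tendsto_zero X_meas X_lim hq
  simp only [X, pow_zero, one_mul] at telescope
  simp only [weight_eq, mul_assoc, ENNReal.tsum_mul_left]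
  gcongr
  exact telescope.trans (ENNReal.tsum_le_tsum X_sub_le)

lemma MartCotypeBound.logScaleNorm_gaussianAverage_fderiv_apply_le [CompleteSpace Y]
    (hm : MartCotypeBound q Y m) (hF : IsBddC1 F) (hF_fin : eLpNorm' F q volume ≠ ∞)
    (hq : 1 ≤ q) (z : 𝔼) :
    logScaleNorm q (fun a => ENNReal.ofReal a *
        eLpNorm' (gaussianAverage a fun y => fderiv ℝ F y z) q volume) ≤
      5 * ENNReal.ofReal m * (ENNReal.ofReal ‖z‖ * eLpNorm' F q volume) := by
  refine (logScaleNorm_le_of_le_tsum (measurable_gaussianIncrement hF.isBddContinuous √3) _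
    (fun k => by positivity) (fun a ha =>
      ofReal_mul_eLpNorm'_gaussianAverage_fderiv_apply_le hF hF_fin ha hq z) hq).trans ?_
  rw [ENNReal.tsum_mul_left]
  calc ENNReal.ofReal ‖z‖ * (∑' k : ℕ, ENNReal.ofReal (√2 / √2 ^ k)) *
        logScaleNorm q (gaussianIncrement q √3 F)
    _ ≤ ENNReal.ofReal ‖z‖ * 5 * (ENNReal.ofReal m * eLpNorm' F q volume) := by
      gcongr
      exacts [tsum_ofReal_sqrt_two_div_pow_le,
        hm.logScaleNorm_gaussianIncrement_le hF.isBddContinuous hq]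
    _ = 5 * ENNReal.ofReal m * (ENNReal.ofReal ‖z‖ * eLpNorm' F q volume) := by ring

end HeatGradient

section HeatDifference

variable {E : Type*} [NormedAddCommGroup E] [InnerProductSpace ℝ E] [FiniteDimensional ℝ E]
  [MeasurableSpace E] [BorelSpace E] {Y : Type*} [NormedAddCommGroup Y] [NormedSpace ℝ Y]
  [CompleteSpace Y] {F : E → Y} {q a b : ℝ}

lemma eLpNorm'_gaussianAverage_sub_sqrt_sq_add_sq_le (hF : IsBddC1 F) (hb : 0 < b) (a : ℝ)
    (hq : 1 ≤ q) :
    eLpNorm' (fun x => gaussianAverage b F x - gaussianAverage √(b ^ 2 + a ^ 2) F x) q volume ≤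
      ENNReal.ofReal (a ^ 2 / b) * gaussianGradNorm q F := by
  refine (eLpNorm'_gaussianAverage_sub_le hF b _ hq).trans ?_
  rw [Real.enorm_eq_ofReal_abs, gaussianGradNorm]
  gcongr
  exact abs_sqrt_sq_add_sq_sub_le hb

lemma eLpNorm'_second_difference_gaussianAverage_le (hF : IsBddC1 F) (hb : 0 < b) (a : ℝ)
    (hq : 1 ≤ q) :
    eLpNorm' (fun x =>
        gaussianAverage (√2 * b) F x - gaussianAverage √((√2 * b) ^ 2 + a ^ 2) F x -
          (gaussianAverage (2 * b) F x - gaussianAverage √((2 * b) ^ 2 + a ^ 2) F x)) q volume ≤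
      ENNReal.ofReal (a ^ 2 / b) * gaussianGradIncrement q √3 F b := by
  have sq_sqrt : √2 ^ 2 = 2 := Real.sq_sqrt (by norm_num)
  let D (y : E) : Y := gaussianAverage b F y - gaussianAverage (√3 * b) F y
  have D_bdd : IsBddC1 D := (hF.gaussianAverage b).sub (hF.gaussianAverage (√3 * b))
  have left_eq (x : E) : gaussianAverage (√2 * b) F x - gaussianAverage (2 * b) F x =
      gaussianAverage b D x :=
    gaussianAverage_sub_eq_gaussianAverage_increment hF.isBddContinuous
      (by rw [mul_pow, sq_sqrt]; ring) (by ring) x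
  have right_eq (x : E) : gaussianAverage √((√2 * b) ^ 2 + a ^ 2) F x -
      gaussianAverage √((2 * b) ^ 2 + a ^ 2) F x = gaussianAverage √(b ^ 2 + a ^ 2) D x :=
    gaussianAverage_sub_eq_gaussianAverage_increment hF.isBddContinuous
      (by rw [Real.sq_sqrt (by positivity), Real.sq_sqrt (by positivity), mul_pow, sq_sqrt]; ring)
      (by rw [Real.sq_sqrt (by positivity), Real.sq_sqrt (by positivity)]; ring) x
  have bound := eLpNorm'_gaussianAverage_sub_sqrt_sq_add_sq_le D_bdd hb a hq
  have gradNorm_eq : gaussianGradNorm q D = gaussianGradIncrement q √3 F b := by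
    simp only [gaussianGradNorm, D, fderiv_gaussianAverage_sub_apply hF, gaussianGradIncrement,
      gaussianIncrement]
  rw [gradNorm_eq] at bound
  simpa only [← left_eq, ← right_eq, sub_sub_sub_comm] using bound

lemma gaussianIncrement_sqrt_two_le (hF : IsBddC1 F) (hF_fin : gaussianGradNorm q F ≠ ∞)
    (ha : 0 < a) (hq : 1 ≤ q) :
    gaussianIncrement q √2 F a ≤ ∑' k : ℕ, ENNReal.ofReal a * ENNReal.ofReal (√2 / √2 ^ k) *
      gaussianGradIncrement q √3 F (a * (√2 ^ k / √2)) := by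
  let X (k : ℕ) (x : E) : Y := gaussianAverage (√2 ^ k * a) F x -
    gaussianAverage √((√2 ^ k * a) ^ 2 + a ^ 2) F x
  have X_meas (k : ℕ) : AEStronglyMeasurable (X k) volume :=
    ((hF.gaussianAverage _).sub (hF.gaussianAverage _)).contDiff.continuous.aestronglyMeasurable
  have X_lim : Filter.Tendsto (fun k => eLpNorm' (X k) q volume) Filter.atTop (nhds 0) := by
    refine tendsto_zero_of_le_ofReal_div_sqrt_two_pow (c := a) hF_fin fun k => ?_
    rw [show a / √2 ^ k = a ^ 2 / (√2 ^ k * a) by field_simp]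
    exact eLpNorm'_gaussianAverage_sub_sqrt_sq_add_sq_le hF (by positivity) a hq
  have X_sub_le (k : ℕ) : eLpNorm' (fun x => X k x - X (k + 1) x) q volume ≤
      ENNReal.ofReal (a ^ 2 / (a * (√2 ^ k / √2))) *
        gaussianGradIncrement q √3 F (a * (√2 ^ k / √2)) := by
    simp only [X, sqrt_two_pow_mul_eq a k, sqrt_two_pow_succ_mul_eq]
    exact eLpNorm'_second_difference_gaussianAverage_le hF (by positivity) a hq
  have weight_eq (k : ℕ) : ENNReal.ofReal a * ENNReal.ofReal (√2 / √2 ^ k) =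
      ENNReal.ofReal (a ^ 2 / (a * (√2 ^ k / √2))) := by
    rw [← ENNReal.ofReal_mul ha.le]
    congr 1
    field_simp
  have telescope := eLpNorm'_le_tsum_of_tendsto_zero X_meas X_lim hq
  have sqrt_eq : √(a ^ 2 + a ^ 2) = √2 * a := by
    rw [← two_mul, Real.sqrt_mul zero_le_two, Real.sqrt_sq ha.le]
  simp only [X, pow_zero, one_mul, sqrt_eq] at telescope
  simp only [weight_eq]
  exact telescope.trans (ENNReal.tsum_le_tsum X_sub_le)

lemma eLpNorm'_sub_gaussianAverage_le (hF : IsBddC1 F) (hF_fin : gaussianGradNorm q F ≠ ∞)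
    (hq : 1 ≤ q) :
    eLpNorm' (fun x => F x - gaussianAverage a F x) q volume ≤
      ∑' k : ℕ, gaussianIncrement q √2 F (a * (1 / √2 ^ (k + 1))) := by
  let X (k : ℕ) (x : E) : Y := F x - gaussianAverage (a / √2 ^ k) F x
  have X_meas (k : ℕ) : AEStronglyMeasurable (X k) volume :=
    (hF.sub (hF.gaussianAverage _)).contDiff.continuous.aestronglyMeasurable
  have X_lim : Filter.Tendsto (fun k => eLpNorm' (X k) q volume) Filter.atTop (nhds 0) := by
    refine tendsto_zero_of_le_ofReal_div_sqrt_two_pow (c := |a|) hF_fin fun k => ?_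
    have bound := eLpNorm'_gaussianAverage_sub_le hF 0 (a / √2 ^ k) hq
    rwa [gaussianAverage_zero, sub_zero, Real.enorm_eq_ofReal_abs, abs_div,
      abs_of_pos (by positivity : 0 < √2 ^ k)] at bound
  have X_sub_eq (k : ℕ) : eLpNorm' (fun x => X k x - X (k + 1) x) q volume =
      gaussianIncrement q √2 F (a * (1 / √2 ^ (k + 1))) := by
    have scale_eq : √2 * (a / √2 ^ (k + 1)) = a / √2 ^ k := by rw [pow_succ]; field_simp
    simp only [gaussianIncrement, X, _root_.sub_sub_sub_cancel_left, mul_one_div, scale_eq]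
  have telescope := eLpNorm'_le_tsum_of_tendsto_zero X_meas X_lim hq
  simpa only [X_sub_eq, X, pow_zero, div_one] using telescope

end HeatDifference

section HeatDifferenceSquareFunction

variable {E : Type} [NormedAddCommGroup E] [InnerProductSpace ℝ E] [FiniteDimensional ℝ E]
  [MeasurableSpace E] [BorelSpace E] {Y : Type*} [NormedAddCommGroup Y] [NormedSpace ℝ Y]
  [CompleteSpace Y] {F : E → Y} {q m : ℝ}

lemma MartCotypeBound.logScaleNorm_gaussianIncrement_sqrt_two_le (hm : MartCotypeBound q Y m)
    (hF : IsBddC1 F) (hF_fin : gaussianGradNorm q F ≠ ∞) (hq : 1 ≤ q) :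
    logScaleNorm q (fun a => ENNReal.ofReal a⁻¹ * gaussianIncrement q √2 F a) ≤
      5 * (ENNReal.ofReal m * gaussianGradNorm q F) := by
  have le_tsum (a : ℝ) (ha : 0 < a) : ENNReal.ofReal a⁻¹ * gaussianIncrement q √2 F a ≤
      ∑' k : ℕ, ENNReal.ofReal (√2 / √2 ^ k) *
        gaussianGradIncrement q √3 F (a * (√2 ^ k / √2)) := by
    refine (mul_le_mul_right (gaussianIncrement_sqrt_two_le hF hF_fin ha hq) _).trans_eq ?_
    simp only [mul_assoc, ENNReal.tsum_mul_left]
    rw [← mul_assoc, ← ENNReal.ofReal_mul (by positivity), inv_mul_cancel₀ ha.ne',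
      ENNReal.ofReal_one, one_mul]
  refine (logScaleNorm_le_of_le_tsum (measurable_gaussianGradIncrement hF √3) _
    (fun k => by positivity) le_tsum hq).trans ?_
  gcongr
  exacts [tsum_ofReal_sqrt_two_div_pow_le, hm.logScaleNorm_gaussianGradIncrement_le hF hq]

lemma MartCotypeBound.logScaleNorm_sub_gaussianAverage_le (hm : MartCotypeBound q Y m)
    (hF : IsBddC1 F) (hF_fin : gaussianGradNorm q F ≠ ∞) (hq : 1 ≤ q) :
    logScaleNorm q (fun a =>
        ENNReal.ofReal a⁻¹ * eLpNorm' (fun x => F x - gaussianAverage a F x) q volume) ≤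
      25 * (ENNReal.ofReal m * gaussianGradNorm q F) := by
  let B (a : ℝ) : ℝ≥0∞ := ENNReal.ofReal a⁻¹ * gaussianIncrement q √2 F a
  have B_meas : Measurable B := by
    have := measurable_gaussianIncrement (q := q) hF.isBddContinuous √2
    fun_prop
  have le_tsum (a : ℝ) (ha : 0 < a) :
      ENNReal.ofReal a⁻¹ * eLpNorm' (fun x => F x - gaussianAverage a F x) q volume ≤
        ∑' k : ℕ, ENNReal.ofReal (√2 / √2 ^ k) * B (a * (1 / √2 ^ (k + 1))) := by
    refine (mul_le_mul_right (eLpNorm'_sub_gaussianAverage_le hF hF_fin hq) _).trans ?_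
    rw [← ENNReal.tsum_mul_left]
    refine ENNReal.tsum_le_tsum fun k => ?_
    rw [← mul_assoc, ← ENNReal.ofReal_mul (by positivity)]
    gcongr
    have weight_eq : √2 / √2 ^ k * (a * (1 / √2 ^ (k + 1)))⁻¹ = a⁻¹ * √2 ^ 2 := by
      rw [pow_succ]; field_simp
    rw [weight_eq, Real.sq_sqrt zero_le_two]
    linarith [inv_pos.2 ha]
  refine (logScaleNorm_le_of_le_tsum B_meas _ (fun k => by positivity) le_tsum hq).trans ?_
  refine (mul_le_mul' tsum_ofReal_sqrt_two_div_pow_le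
    (hm.logScaleNorm_gaussianIncrement_sqrt_two_le hF hF_fin hq)).trans_eq ?_
  rw [← mul_assoc]
  norm_num

end HeatDifferenceSquareFunction

section PolarCoordinates

variable {E : Type*} [NormedAddCommGroup E] [NormedSpace ℝ E] [FiniteDimensional ℝ E]
  [Nontrivial E] [MeasurableSpace E] [BorelSpace E]

lemma lintegral_comp_norm_mul_of_homogeneous (μ : Measure E) [μ.IsAddHaarMeasure] {ψ : E → ℝ≥0∞}
    (hψ : Measurable ψ) (hψ_hom : ∀ (r : ℝ) w, 0 < r → ψ (r • w) = ENNReal.ofReal r * ψ w)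
    {K : ℝ → ℝ≥0∞} (hK : Measurable K) :
    ∫⁻ w, K ‖w‖ * ψ w ∂μ = (∫⁻ σ : sphere (0 : E) 1, ψ σ ∂μ.toSphere) *
      ∫⁻ r : Ioi (0 : ℝ), K r * ENNReal.ofReal r
        ∂(Measure.volumeIoiPow (Module.finrank ℝ E - 1)) := by
  have ψ_meas : Measurable fun σ : sphere (0 : E) 1 => ψ σ := hψ.comp measurable_subtype_coe
  have radial_meas : Measurable fun r : Ioi (0 : ℝ) => K r * ENNReal.ofReal r := by fun_prop
  have polar_eq (x : ({0}ᶜ : Set E)) : ψ (homeomorphUnitSphereProd E x).1 *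
      (K (homeomorphUnitSphereProd E x).2 * ENNReal.ofReal (homeomorphUnitSphereProd E x).2) =
        K ‖(x : E)‖ * ψ x := by
    have norm_pos : 0 < ‖(x : E)‖ := norm_pos_iff.2 x.2
    rw [homeomorphUnitSphereProd_apply_fst_coe, homeomorphUnitSphereProd_apply_snd_coe,
      mul_left_comm, mul_comm (ψ _), ← hψ_hom _ _ norm_pos, smul_inv_smul₀ norm_pos.ne']
  rw [← lintegral_prod_mul ψ_meas.aemeasurable radial_meas.aemeasurable,
    ← μ.measurePreserving_homeomorphUnitSphereProd.lintegral_comp (by fun_prop)]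
  simp only [polar_eq]
  rw [lintegral_subtype_comap (measurableSet_singleton _).compl fun x : E => K ‖x‖ * ψ x,
    restrict_compl_singleton]

end PolarCoordinates

section ExponentConversion

variable {α Y : Type*} [MeasurableSpace α] [NormedAddCommGroup Y] {μ : Measure α} {F : α → Y}
  {q : ℝ}

lemma eLpNorm_ofReal_eq_eLpNorm' (hq : 0 < q) :
    eLpNorm F (ENNReal.ofReal q) μ = eLpNorm' F q μ := by
  rw [eLpNorm_eq_eLpNorm' (ENNReal.ofReal_pos.2 hq).ne' ENNReal.ofReal_ne_top,
    ENNReal.toReal_ofReal hq.le]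

lemma eLpNorm'_ne_top_of_hasCompactSupport [TopologicalSpace α] [BorelSpace α]
    [IsFiniteMeasureOnCompacts μ] (hF : Continuous F) (hF_supp : HasCompactSupport F)
    (hq : 0 < q) : eLpNorm' F q μ ≠ ∞ :=
  eLpNorm_ofReal_eq_eLpNorm' (F := F) (μ := μ) hq ▸
    (hF.memLp_of_hasCompactSupport hF_supp).eLpNorm_ne_top

end ExponentConversion

section GradientNorm

open ProbabilityTheory

lemma lintegral_stdGaussian_le_of_homogeneous {n : ℕ} (hn : 0 < n)
    {ψ : EuclideanSpace ℝ (Fin n) → ℝ≥0∞} (hψ : Measurable ψ)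
    (hψ_hom : ∀ (r : ℝ) w, 0 < r → ψ (r • w) = ENNReal.ofReal r * ψ w) :
    ∫⁻ w, ψ w ∂(stdGaussian (EuclideanSpace ℝ (Fin n))) ≤ ENNReal.ofReal √n *
      ⨍⁻ σ : sphere (0 : EuclideanSpace ℝ (Fin n)) 1, ψ σ ∂volume.toSphere := by
  have : Nonempty (Fin n) := ⟨⟨0, hn⟩⟩
  let V := EuclideanSpace ℝ (Fin n)
  let K (r : ℝ) : ℝ≥0∞ := ENNReal.ofReal
    ((4 * Real.pi * (1 / 2)) ^ (-(n : ℝ) / 2) * Real.exp (-r ^ 2 / (4 * (1 / 2))))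
  let R := ∫⁻ r : Ioi (0 : ℝ), K r * ENNReal.ofReal r
    ∂(Measure.volumeIoiPow (Module.finrank ℝ V - 1))
  have polar {φ : V → ℝ≥0∞} (hφ : Measurable φ)
      (hφ_hom : ∀ (r : ℝ) w, 0 < r → φ (r • w) = ENNReal.ofReal r * φ w) :
      ∫⁻ w, φ w ∂(stdGaussian V) =
        (∫⁻ σ : sphere (0 : V) 1, φ σ ∂(volume : Measure V).toSphere) * R := by
    rw [stdGaussian_eq_withDensity_heatKernel, lintegral_withDensity_eq_lintegral_mul _
      (contDiff_heatKernel (k := 0)).continuous.measurable.ennreal_ofReal hφ,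
      ← lintegral_comp_norm_mul_of_homogeneous volume hφ hφ_hom (by fun_prop)]
    rfl
  have sphere_mul_le : (volume : Measure V).toSphere univ * R ≤ ENNReal.ofReal √n := by
    have enorm_hom (r : ℝ) (w : V) (hr : 0 < r) : ‖r • w‖ₑ = ENNReal.ofReal r * ‖w‖ₑ := by
      rw [enorm_smul, Real.enorm_of_nonneg hr.le]
    have enorm_eq_one (σ : sphere (0 : V) 1) : ‖(σ : V)‖ₑ = 1 := by
      rw [← ofReal_norm, norm_eq_of_mem_sphere, ENNReal.ofReal_one]
    have mean_norm := polar measurable_enorm enorm_hom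
    simp only [enorm_eq_one, lintegral_one] at mean_norm
    have mean_norm_le := lintegral_enorm_stdGaussian_le (E := V)
    rwa [mean_norm, finrank_euclideanSpace_fin] at mean_norm_le
  rw [polar hψ hψ_hom, ← measure_mul_laverage, mul_right_comm]
  gcongr

variable {E : Type*} [NormedAddCommGroup E] [InnerProductSpace ℝ E] [FiniteDimensional ℝ E]
  [MeasurableSpace E] [BorelSpace E] {Y : Type*} [NormedAddCommGroup Y] [NormedSpace ℝ Y]
  {F : E → Y} {q : ℝ}

lemma measurable_eLpNorm'_fderiv_apply (hF : IsBddC1 F) :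
    Measurable fun z => eLpNorm' (fun y => fderiv ℝ F y z) q volume := by
  have := hF.isBddContinuous_fderiv.continuous
  exact measurable_eLpNorm'_of_measurable_enorm volume
    (by fun_prop : Continuous fun p : E × E => fderiv ℝ F p.2 p.1).enorm.measurable

lemma gaussianGradNorm_le_laverage_sphere {n : ℕ} (hn : 0 < n) {F : EuclideanSpace ℝ (Fin n) → Y}
    (hF : IsBddC1 F) (hq : 0 < q) :
    gaussianGradNorm q F ≤ ENNReal.ofReal √n *
      ⨍⁻ σ : sphere (0 : EuclideanSpace ℝ (Fin n)) 1,
        eLpNorm' (fun y => fderiv ℝ F y σ) q volume ∂volume.toSphere := by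
  refine lintegral_stdGaussian_le_of_homogeneous hn (measurable_eLpNorm'_fderiv_apply hF)
    fun r w hr => ?_
  simp only [map_smul]
  rw [← Real.enorm_of_nonneg hr.le]
  exact eLpNorm'_const_smul r hq

lemma gaussianGradNorm_le_eLpNorm'_fderiv (F : E → Y) (hq : 0 < q) :
    gaussianGradNorm q F ≤
      ENNReal.ofReal √(Module.finrank ℝ E) * eLpNorm' (fderiv ℝ F) q volume := by
  have apply_le (w : E) : eLpNorm' (fun y => fderiv ℝ F y w) q volume ≤
      ‖w‖ₑ * eLpNorm' (fderiv ℝ F) q volume :=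
    eLpNorm'_le_nnreal_smul_eLpNorm'_of_ae_le_mul
      (.of_forall fun y => by rw [mul_comm]; exact (fderiv ℝ F y).le_opNNNorm w) hq
  refine (lintegral_mono apply_le).trans ?_
  rw [lintegral_mul_const _ measurable_enorm]
  gcongr
  exact lintegral_enorm_stdGaussian_le

end GradientNorm

section TaylorError

variable {E : Type*} [NormedAddCommGroup E] [InnerProductSpace ℝ E] [FiniteDimensional ℝ E]
  [MeasurableSpace E] [BorelSpace E] {Y : Type*} [NormedAddCommGroup Y] [NormedSpace ℝ Y]
  {F : E → Y} {q : ℝ}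

/-- The error at `x + h` of the first-order Taylor polynomial at `x` of the Gaussian average of `F`
at scale `a`, viewed as an approximation of `F`. -/
def gaussianTaylorError (F : E → Y) (a : ℝ) (h x : E) : Y :=
  F (x + h) - (gaussianAverage a F x + fderiv ℝ (gaussianAverage a F) x h)

lemma continuous_gaussianTaylorError (hF : IsBddC1 F) :
    Continuous fun p : (ℝ × E) × E => gaussianTaylorError F p.1.1 p.1.2 p.2 := by
  have F_cont := hF.isBddContinuous.continuous
  have avg_cont := (continuous_gaussianAverage hF.isBddContinuous).comp
    (by fun_prop : Continuous fun p : (ℝ × E) × E => (p.1.1, p.2))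
  have fderiv_cont := (continuous_gaussianAverage hF.isBddContinuous_fderiv).comp
    (by fun_prop : Continuous fun p : (ℝ × E) × E => (p.1.1, p.2))
  simp only [Function.comp_def] at avg_cont fderiv_cont
  simp only [gaussianTaylorError, fderiv_gaussianAverage hF]
  fun_prop

lemma measurable_eLpNorm'_sub_gaussianAverage (hF : IsBddContinuous F) :
    Measurable fun a => eLpNorm' (fun x => F x - gaussianAverage a F x) q volume := by
  have F_cont := hF.continuous
  have avg_cont := continuous_gaussianAverage hF
  exact measurable_eLpNorm'_of_measurable_enorm volume
    (by fun_prop : Continuous fun p : ℝ × E => F p.2 - gaussianAverage p.1 F p.2).enorm.measurable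

lemma measurable_eLpNorm'_gaussianAverage (hF : IsBddContinuous F) :
    Measurable fun a => eLpNorm' (gaussianAverage a F) q volume :=
  measurable_eLpNorm'_of_measurable_enorm volume
    (continuous_gaussianAverage hF).enorm.measurable

lemma eLpNorm'_gaussianAverage_fderiv_fderiv_smul (F : E → Y) (a t : ℝ) (z : E) (hq : 0 < q) :
    eLpNorm' (gaussianAverage a fun y => fderiv ℝ (fun y => fderiv ℝ F y (t • z)) y (t • z))
        q volume =
      ENNReal.ofReal (t ^ 2) *
        eLpNorm' (gaussianAverage a fun y => fderiv ℝ (fun y => fderiv ℝ F y z) y z) q volume := by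
  have deriv_eq (y : E) : fderiv ℝ (fun y => fderiv ℝ F y (t • z)) y (t • z) =
      t ^ 2 • fderiv ℝ (fun y => fderiv ℝ F y z) y z := by
    rw [show (fun y => fderiv ℝ F y (t • z)) = t • fun y => fderiv ℝ F y z from
      funext fun y => map_smul _ _ _, fderiv_const_smul_field, Pi.smul_apply, smul_apply, map_smul,
      smul_smul, sq]
  have average_eq : (gaussianAverage a fun y => t ^ 2 • fderiv ℝ (fun y => fderiv ℝ F y z) y z) =
      t ^ 2 • gaussianAverage a fun y => fderiv ℝ (fun y => fderiv ℝ F y z) y z :=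
    funext fun x => integral_smul _ _
  simp only [deriv_eq]
  rw [average_eq, eLpNorm'_const_smul _ hq, Real.enorm_of_nonneg (sq_nonneg t)]

variable [CompleteSpace Y]

lemma eLpNorm'_gaussianTaylorError_le (hF : IsBddC1 F) (hF' : IsBddC1 (fderiv ℝ F)) (a : ℝ) (h : E)
    (hq : 1 ≤ q) :
    eLpNorm' (gaussianTaylorError F a h) q volume ≤
      eLpNorm' (fun x => F x - gaussianAverage a F x) q volume +
        eLpNorm' (gaussianAverage a fun y => fderiv ℝ (fun y => fderiv ℝ F y h) y h) q volume := by
  let P := gaussianAverage a F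
  have P_contDiff : ContDiff ℝ 2 P := contDiff_two_gaussianAverage hF hF' a
  have F_cont := hF.isBddContinuous.continuous
  have P_cont := P_contDiff.continuous
  have fderiv_P_cont := P_contDiff.continuous_fderiv two_ne_zero
  have split : gaussianTaylorError F a h =
      (fun x => F (x + h) - P (x + h)) + fun x => P (x + h) - P x - fderiv ℝ P x h := by
    ext x
    simp only [gaussianTaylorError, Pi.add_apply, P]
    abel
  have second_deriv (x : E) : fderiv ℝ (fun y => fderiv ℝ P y h) x h =
      gaussianAverage a (fun y => fderiv ℝ (fun y => fderiv ℝ F y h) y h) x := by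
    simp only [P, fderiv_gaussianAverage_apply hF]
    exact fderiv_gaussianAverage_apply (hF'.apply h) a x h
  have remainder_le := eLpNorm'_taylor_remainder_le (μ := volume) P_contDiff h hq
  simp only [second_deriv] at remainder_le
  rw [split, ← eLpNorm'_comp_add_right (fun x => F x - gaussianAverage a F x) h]
  refine (eLpNorm'_add_le (Continuous.aestronglyMeasurable (by fun_prop))
    (Continuous.aestronglyMeasurable (by fun_prop)) hq).trans ?_
  gcongr

lemma ofReal_inv_mul_eLpNorm'_gaussianTaylorError_le (hF : IsBddC1 F) (hF' : IsBddC1 (fderiv ℝ F))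
    {s t : ℝ} (hs : 0 < s) (ht : 0 < t) (z : E) (hq : 1 ≤ q) :
    ENNReal.ofReal t⁻¹ * eLpNorm' (gaussianTaylorError F (s * t) (t • z)) q volume ≤
      ENNReal.ofReal s * (ENNReal.ofReal (s * t)⁻¹ *
        eLpNorm' (fun x => F x - gaussianAverage (s * t) F x) q volume) +
      ENNReal.ofReal s⁻¹ * (ENNReal.ofReal (s * t) * eLpNorm'
        (gaussianAverage (s * t) fun y => fderiv ℝ (fun y => fderiv ℝ F y z) y z) q volume) := by
  have error_le := eLpNorm'_gaussianTaylorError_le hF hF' (s * t) (t • z) hq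
  rw [eLpNorm'_gaussianAverage_fderiv_fderiv_smul F _ _ _ (by linarith)] at error_le
  refine (mul_le_mul_right error_le _).trans_eq ?_
  simp only [mul_add, ← mul_assoc]
  rw [← ENNReal.ofReal_mul (by positivity), ← ENNReal.ofReal_mul (by positivity),
    ← ENNReal.ofReal_mul (by positivity)]
  congr 3 <;> field_simp

end TaylorError

section TaylorErrorSquareFunction

variable {n : ℕ} {Y : Type*} [NormedAddCommGroup Y] [NormedSpace ℝ Y] [CompleteSpace Y]
  {F : EuclideanSpace ℝ (Fin n) → Y} {q m s : ℝ}

local notation "𝔼" => EuclideanSpace ℝ (Fin n)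

lemma MartCotypeBound.logScaleNorm_gaussianTaylorError_le (hm : MartCotypeBound q Y m)
    (hF : IsBddC1 F) (hF' : IsBddC1 (fderiv ℝ F)) (hF_fin : gaussianGradNorm q F ≠ ∞) {z : 𝔼}
    (hFz_fin : eLpNorm' (fun y => fderiv ℝ F y z) q volume ≠ ∞) (hs : 0 < s) (hq : 1 ≤ q) :
    logScaleNorm q (fun t =>
        ENNReal.ofReal t⁻¹ * eLpNorm' (gaussianTaylorError F (s * t) (t • z)) q volume) ≤
      ENNReal.ofReal s * (25 * (ENNReal.ofReal m * gaussianGradNorm q F)) +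
        ENNReal.ofReal s⁻¹ * (5 * ENNReal.ofReal m *
          (ENNReal.ofReal ‖z‖ * eLpNorm' (fun y => fderiv ℝ F y z) q volume)) := by
  have hq0 : 0 < q := by linarith
  let R (a : ℝ) : ℝ≥0∞ :=
    ENNReal.ofReal a⁻¹ * eLpNorm' (fun x => F x - gaussianAverage a F x) q volume
  let S (a : ℝ) : ℝ≥0∞ := ENNReal.ofReal a *
    eLpNorm' (gaussianAverage a fun y => fderiv ℝ (fun y => fderiv ℝ F y z) y z) q volume
  have R_meas : Measurable R := by
    have := measurable_eLpNorm'_sub_gaussianAverage (q := q) hF.isBddContinuous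
    fun_prop
  have S_meas : Measurable S := by
    have := measurable_eLpNorm'_gaussianAverage (q := q)
      ((hF'.apply z).isBddContinuous_fderiv.apply z)
    fun_prop
  calc logScaleNorm q (fun t =>
        ENNReal.ofReal t⁻¹ * eLpNorm' (gaussianTaylorError F (s * t) (t • z)) q volume)
    _ ≤ logScaleNorm q
          ((fun t => ENNReal.ofReal s * R (s * t)) + fun t => ENNReal.ofReal s⁻¹ * S (s * t)) :=
      eLpNorm'_mono_enorm_ae hq0.le <| .of_forall fun u =>
        ofReal_inv_mul_eLpNorm'_gaussianTaylorError_le hF hF' hs (Real.exp_pos u) z hq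
    _ ≤ logScaleNorm q (fun t => ENNReal.ofReal s * R (s * t)) +
          logScaleNorm q (fun t => ENNReal.ofReal s⁻¹ * S (s * t)) :=
      eLpNorm'_add_le (Measurable.aestronglyMeasurable (by fun_prop))
        (Measurable.aestronglyMeasurable (by fun_prop)) hq
    _ = ENNReal.ofReal s * logScaleNorm q R + ENNReal.ofReal s⁻¹ * logScaleNorm q S := by
      rw [logScaleNorm_const_mul_comp_mul R_meas _ hs hq0,
        logScaleNorm_const_mul_comp_mul S_meas _ hs hq0]
    _ ≤ _ := by
      gcongr
      exacts [hm.logScaleNorm_sub_gaussianAverage_le hF hF_fin hq,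
        hm.logScaleNorm_gaussianAverage_fderiv_apply_le (hF'.apply z) hFz_fin hq z]

end TaylorErrorSquareFunction

section Tonelli

lemma lintegral_lintegral_lintegral_div_swap {α β κ : Type*} [MeasurableSpace α] [MeasurableSpace β]
    [MeasurableSpace κ] {μ : Measure α} {ν : Measure β} {ρ : Measure κ} [SFinite μ] [SFinite ν]
    [SFinite ρ] {G : κ → β → α → ℝ≥0∞} (hG : Measurable fun p : (κ × β) × α => G p.1.1 p.1.2 p.2)
    {c : κ → ℝ≥0∞} (hc : Measurable c) :
    ∫⁻ x, ∫⁻ t, (∫⁻ z, G t z x ∂ν) / c t ∂ρ ∂μ = ∫⁻ z, ∫⁻ t, (∫⁻ x, G t z x ∂μ) / c t ∂ρ ∂ν := by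
  have quot_meas : Measurable fun p : (κ × β) × α => G p.1.1 p.1.2 p.2 * (c p.1.1)⁻¹ :=
    hG.mul (hc.comp (by fun_prop : Measurable fun p : (κ × β) × α => p.1.1)).inv
  have slice_meas (x : α) : Measurable fun p : κ × β => G p.1 p.2 x * (c p.1)⁻¹ :=
    quot_meas.comp (by fun_prop : Measurable fun p : κ × β => (p, x))
  have slice_meas' (z : β) : Measurable fun p : α × κ => G p.2 z p.1 * (c p.2)⁻¹ :=
    quot_meas.comp (by fun_prop : Measurable fun p : α × κ => ((p.2, z), p.1))
  have inner_meas : Measurable fun p : α × β => ∫⁻ t, G t p.2 p.1 * (c t)⁻¹ ∂ρ :=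
    (quot_meas.comp (by fun_prop : Measurable fun p : (α × β) × κ =>
      ((p.2, p.1.2), p.1.1))).lintegral_prod_right'
  calc ∫⁻ x, ∫⁻ t, (∫⁻ z, G t z x ∂ν) / c t ∂ρ ∂μ
    _ = ∫⁻ x, ∫⁻ t, ∫⁻ z, G t z x * (c t)⁻¹ ∂ν ∂ρ ∂μ := by
      refine lintegral_congr fun x => lintegral_congr fun t => ?_
      rw [div_eq_mul_inv, lintegral_mul_const (f := fun z => G t z x) _
        (hG.comp (by fun_prop : Measurable fun z : β => ((t, z), x)))]
    _ = ∫⁻ x, ∫⁻ z, ∫⁻ t, G t z x * (c t)⁻¹ ∂ρ ∂ν ∂μ :=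
      lintegral_congr fun x => lintegral_lintegral_swap (slice_meas x).aemeasurable
    _ = ∫⁻ z, ∫⁻ x, ∫⁻ t, G t z x * (c t)⁻¹ ∂ρ ∂μ ∂ν :=
      lintegral_lintegral_swap inner_meas.aemeasurable
    _ = ∫⁻ z, ∫⁻ t, ∫⁻ x, G t z x * (c t)⁻¹ ∂μ ∂ρ ∂ν :=
      lintegral_congr fun z => lintegral_lintegral_swap (slice_meas' z).aemeasurable
    _ = ∫⁻ z, ∫⁻ t, (∫⁻ x, G t z x ∂μ) / c t ∂ρ ∂ν := by
      refine lintegral_congr fun z => lintegral_congr fun t => ?_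
      rw [div_eq_mul_inv, lintegral_mul_const (f := fun x => G t z x) _
        (hG.comp (by fun_prop : Measurable fun x : α => ((t, z), x)))]

lemma setLIntegral_Ioi_zero_eq_lintegral_exp (φ : ℝ → ℝ≥0∞) :
    ∫⁻ t in Ioi (0 : ℝ), φ t = ∫⁻ u, ENNReal.ofReal (Real.exp u) * φ (Real.exp u) := by
  have subst := lintegral_image_eq_lintegral_abs_deriv_mul (s := univ) MeasurableSet.univ
    (fun u _ => (Real.hasDerivAt_exp u).hasDerivWithinAt) Real.exp_injective.injOn φ
  simpa only [image_univ, Real.range_exp, setLIntegral_univ, Real.abs_exp] using subst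

lemma logScaleNorm_inv_mul_eLpNorm'_rpow {α Y : Type*} [MeasurableSpace α] [NormedAddCommGroup Y]
    (μ : Measure α) (G : ℝ → α → Y) {q : ℝ} (hq : 0 < q) :
    logScaleNorm q (fun t => ENNReal.ofReal t⁻¹ * eLpNorm' (G t) q μ) ^ q =
      ∫⁻ t in Ioi (0 : ℝ), (∫⁻ x, ‖G t x‖ₑ ^ q ∂μ) / ENNReal.ofReal (t ^ (q + 1)) := by
  have weight_eq (u : ℝ) : ENNReal.ofReal (Real.exp u)⁻¹ ^ q =
      ENNReal.ofReal (Real.exp u) * (ENNReal.ofReal (Real.exp u ^ (q + 1)))⁻¹ := by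
    have exp_pos := Real.exp_pos u
    rw [← ENNReal.ofReal_inv_of_pos (by positivity), ← ENNReal.ofReal_mul exp_pos.le,
      ENNReal.ofReal_rpow_of_pos (by positivity), Real.inv_rpow exp_pos.le,
      Real.rpow_add_one exp_pos.ne']
    congr 1
    field_simp
  rw [logScaleNorm, ← lintegral_rpow_enorm_eq_rpow_eLpNorm' hq,
    setLIntegral_Ioi_zero_eq_lintegral_exp]
  refine lintegral_congr fun u => ?_
  rw [enorm_eq_self, ENNReal.mul_rpow_of_nonneg _ _ hq.le, weight_eq,
    ← lintegral_rpow_enorm_eq_rpow_eLpNorm' hq, div_eq_mul_inv, mul_assoc, mul_comm _⁻¹]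

end Tonelli

section WeightedTaylorError

variable {n : ℕ} {Y : Type*} [NormedAddCommGroup Y] [NormedSpace ℝ Y]
  {F : EuclideanSpace ℝ (Fin n) → Y} {q m s : ℝ}

local notation "𝔼" => EuclideanSpace ℝ (Fin n)

lemma lintegral_gaussianTaylorError_eq (hF : IsBddC1 F) (ν : Measure 𝔼) [SFinite ν] (s : ℝ)
    (hq : 0 < q) :
    ∫⁻ x, ∫⁻ t in Ioi (0 : ℝ), (∫⁻ z, ‖gaussianTaylorError F (s * t) (t • z) x‖ₑ ^ q ∂ν) /
        ENNReal.ofReal (t ^ (q + 1)) =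
      ∫⁻ z, logScaleNorm q (fun t => ENNReal.ofReal t⁻¹ *
        eLpNorm' (gaussianTaylorError F (s * t) (t • z)) q volume) ^ q ∂ν := by
  have error_meas : Measurable fun p : (ℝ × 𝔼) × 𝔼 =>
      ‖gaussianTaylorError F (s * p.1.1) (p.1.1 • p.1.2) p.2‖ₑ ^ q :=
    ((continuous_gaussianTaylorError hF).comp (by fun_prop : Continuous fun p : (ℝ × 𝔼) × 𝔼 =>
      ((s * p.1.1, p.1.1 • p.1.2), p.2))).enorm.measurable.pow_const q
  rw [lintegral_lintegral_lintegral_div_swap error_meas (by fun_prop)]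
  simp only [logScaleNorm_inv_mul_eLpNorm'_rpow volume _ hq]

variable [CompleteSpace Y]

lemma MartCotypeBound.lintegral_gaussianTaylorError_rpow_le (hm : MartCotypeBound q Y m)
    (hF : ContDiff ℝ 2 F) (hF_supp : HasCompactSupport F) (ν : Measure 𝔼)
    [IsZeroOrProbabilityMeasure ν] (hs : 0 < s) (hq : 1 ≤ q) :
    (∫⁻ x, ∫⁻ t in Ioi (0 : ℝ), (∫⁻ z, ‖gaussianTaylorError F (s * t) (t • z) x‖ₑ ^ q ∂ν) /
        ENNReal.ofReal (t ^ (q + 1))) ^ (1 / q) ≤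
      ENNReal.ofReal s⁻¹ * (5 * ENNReal.ofReal m) * eLpNorm' (fun z =>
        ENNReal.ofReal ‖z‖ * eLpNorm' (fun y => fderiv ℝ F y z) q volume) q ν +
      ENNReal.ofReal s * (25 * (ENNReal.ofReal m * gaussianGradNorm q F)) := by
  have hq0 : 0 < q := by linarith
  have F_bdd : IsBddC1 F := .of_hasCompactSupport (hF.of_le one_le_two) hF_supp
  have fderiv_bdd : IsBddC1 (fderiv ℝ F) :=
    .of_hasCompactSupport (hF.fderiv_right (by norm_num)) (hF_supp.fderiv ℝ)
  have fderiv_ne_top : eLpNorm' (fderiv ℝ F) q volume ≠ ∞ :=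
    eLpNorm'_ne_top_of_hasCompactSupport fderiv_bdd.isBddContinuous.continuous
      (hF_supp.fderiv ℝ) hq0
  have gradNorm_ne_top : gaussianGradNorm q F ≠ ∞ :=
    ne_top_of_le_ne_top (ENNReal.mul_ne_top ENNReal.ofReal_ne_top fderiv_ne_top)
      (gaussianGradNorm_le_eLpNorm'_fderiv F hq0)
  have fderiv_apply_ne_top (z : 𝔼) : eLpNorm' (fun y => fderiv ℝ F y z) q volume ≠ ∞ :=
    eLpNorm'_ne_top_of_hasCompactSupport (fderiv_bdd.apply z).isBddContinuous.continuous
      (hF_supp.fderiv_apply ℝ z) hq0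
  let c := ENNReal.ofReal s⁻¹ * (5 * ENNReal.ofReal m)
  let α := ENNReal.ofReal s * (25 * (ENNReal.ofReal m * gaussianGradNorm q F))
  let β (z : 𝔼) : ℝ≥0∞ := ENNReal.ofReal ‖z‖ * eLpNorm' (fun y => fderiv ℝ F y z) q volume
  have β_meas : Measurable β := by
    have := measurable_eLpNorm'_fderiv_apply (q := q) F_bdd
    fun_prop
  rw [lintegral_gaussianTaylorError_eq F_bdd ν s hq0]
  calc _ ≤ eLpNorm' ((fun z => c * β z) + fun _ => α) q ν := by
        simp only [eLpNorm', enorm_eq_self]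
        gcongr with z
        refine (hm.logScaleNorm_gaussianTaylorError_le F_bdd fderiv_bdd gradNorm_ne_top
          (fderiv_apply_ne_top z) hs hq).trans_eq ?_
        rw [add_comm, ← mul_assoc (ENNReal.ofReal s⁻¹)]
        rfl
    _ ≤ eLpNorm' (fun z => c * β z) q ν + eLpNorm' (fun _ => α) q ν :=
        eLpNorm'_add_le (Measurable.aestronglyMeasurable (by fun_prop))
          aestronglyMeasurable_const hq
    _ ≤ c * eLpNorm' β q ν + α := by
        rw [eLpNorm'_const_mul β_meas c hq0]
        gcongr
        exact eLpNorm'_const_le α hq0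

end WeightedTaylorError

section SublevelAverage

open ProbabilityTheory

lemma lintegral_cond {α : Type*} [MeasurableSpace α] (μ : Measure α) (S : Set α) (φ : α → ℝ≥0∞) :
    ∫⁻ z, φ z ∂μ[|S] = (∫⁻ z in S, φ z ∂μ) / μ S := by
  rw [ProbabilityTheory.cond, lintegral_smul_measure, smul_eq_mul, mul_comm, div_eq_mul_inv]

variable {E : Type*} [NormedAddCommGroup E] [NormedSpace ℝ E] [FiniteDimensional ℝ E]
  [MeasurableSpace E] [BorelSpace E] (μ : Measure E) [μ.IsAddHaarMeasure] {N : E → ℝ} {t : ℝ}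

lemma setLIntegral_preimage_add_smul (ht : t ≠ 0) (x : E) (S : Set E) (φ : E → ℝ≥0∞) :
    ∫⁻ z in (fun z => x + t • z) ⁻¹' S, φ (x + t • z) ∂μ =
      ENNReal.ofReal |(t ^ Module.finrank ℝ E)⁻¹| * ∫⁻ y in S, φ y ∂μ := by
  have T_emb : MeasurableEmbedding fun z : E => x + t • z :=
    (measurableEmbedding_addLeft x).comp (measurableEmbedding_const_smul₀ ht)
  have map_T : μ.map (fun z => x + t • z) =
      ENNReal.ofReal |(t ^ Module.finrank ℝ E)⁻¹| • μ := by
    have T_eq_comp : (fun z : E => x + t • z) = (fun y => x + y) ∘ (fun z => t • z) := rfl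
    rw [T_eq_comp, ← Measure.map_map (by fun_prop) (by fun_prop),
      Measure.map_addHaar_smul μ ht, Measure.map_smul, map_add_left_eq_self]
  rw [← smul_eq_mul, ← lintegral_smul_measure, ← Measure.restrict_smul, ← map_T,
    T_emb.restrict_map, T_emb.lintegral_map]

lemma lintegral_sublevel_sub_div_measure_eq (hN : ∀ (a : ℝ) (z : E), N (a • z) = |a| * N z)
    (ht : 0 < t) (x : E) (φ : E → ℝ≥0∞) :
    (∫⁻ y in {y | N (y - x) ≤ t}, φ y ∂μ) / μ {y | N (y - x) ≤ t} =
      ∫⁻ z, φ (x + t • z) ∂μ[|{z | N z ≤ 1}] := by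
  have preimage_eq : (fun z => x + t • z) ⁻¹' {y | N (y - x) ≤ t} = {z | N z ≤ 1} := by
    ext z
    simp only [mem_preimage, mem_ofPred_eq, add_sub_cancel_left, hN, abs_of_pos ht,
      mul_le_iff_le_one_right ht]
  have change_of_variables := setLIntegral_preimage_add_smul μ ht.ne' x {y | N (y - x) ≤ t}
  have measure_sublevel := change_of_variables fun _ => 1
  have jacobian_ne_zero : ENNReal.ofReal |(t ^ Module.finrank ℝ E)⁻¹| ≠ 0 := by positivity
  rw [preimage_eq] at change_of_variables
  simp only [preimage_eq, lintegral_one, Measure.restrict_apply_univ] at measure_sublevel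
  rw [lintegral_cond, change_of_variables, measure_sublevel,
    ENNReal.mul_div_mul_left _ _ jacobian_ne_zero ENNReal.ofReal_ne_top]

lemma lintegral_Ioi_sublevel_average_eq (hN : ∀ (a : ℝ) (z : E), N (a • z) = |a| * N z) (x : E)
    (φ : ℝ → E → ℝ≥0∞) (c : ℝ → ℝ≥0∞) :
    ∫⁻ t in Ioi (0 : ℝ), (∫⁻ y in {y | N (y - x) ≤ t}, φ t y ∂μ) / μ {y | N (y - x) ≤ t} / c t =
      ∫⁻ t in Ioi (0 : ℝ), (∫⁻ z, φ t (x + t • z) ∂μ[|{z | N z ≤ 1}]) / c t :=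
  setLIntegral_congr_fun measurableSet_Ioi fun t ht => by
    simp only [lintegral_sublevel_sub_div_measure_eq μ hN ht]

end SublevelAverage

section MainTheorem

variable {n : ℕ} {Y : Type*} [NormedAddCommGroup Y] [NormedSpace ℝ Y]

local notation "𝔼" => EuclideanSpace ℝ (Fin n)

lemma sum_coord_smul_single (L : 𝔼 →L[ℝ] Y) (h : 𝔼) :
    ∑ j, h j • L (EuclideanSpace.single j 1) = L h := by
  conv_rhs => rw [← (EuclideanSpace.basisFun (Fin n) ℝ).sum_repr h, map_sum]
  simp only [map_smul, EuclideanSpace.basisFun_repr, EuclideanSpace.basisFun_apply]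

lemma dirDeriv_eq_fderiv_apply (z : 𝔼) (f : 𝔼 → Y) : dirDeriv z f = fun y => fderiv ℝ f y z :=
  funext fun y => sum_coord_smul_single (fderiv ℝ f y) z

lemma sub_taylor1_heat_eq_gaussianTaylorError {γ t : ℝ} (hγ : 0 < γ) (ht : 0 < t) (f : 𝔼 → Y)
    (x h : 𝔼) : f (x + h) - taylor1 (heat (γ * t ^ 2) f) x (x + h) =
      gaussianTaylorError f (√(2 * γ) * t) h x := by
  have variance_eq : γ * t ^ 2 = (√(2 * γ) * t) ^ 2 / 2 := by
    rw [mul_pow, Real.sq_sqrt (by positivity)]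
    ring
  rw [variance_eq, heat_eq_gaussianAverage (by positivity), taylor1, gaussianTaylorError]
  simp only [add_sub_cancel_left, sum_coord_smul_single]

lemma ofReal_inv_sqrt_two_mul_mul_le {γ : ℝ} (hγ : 0 < γ) (m : ℝ) :
    ENNReal.ofReal (√(2 * γ))⁻¹ * (5 * ENNReal.ofReal m) ≤ ENNReal.ofReal (50 * m / √γ) := by
  have coeff_le : (√(2 * γ))⁻¹ * 5 ≤ 50 / √γ := by
    rw [div_eq_inv_mul]
    gcongr <;> linarith
  calc ENNReal.ofReal (√(2 * γ))⁻¹ * (5 * ENNReal.ofReal m)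
    _ = ENNReal.ofReal ((√(2 * γ))⁻¹ * 5) * ENNReal.ofReal m := by
        rw [ENNReal.ofReal_mul (by positivity), ENNReal.ofReal_ofNat, mul_assoc]
    _ ≤ ENNReal.ofReal (50 / √γ) * ENNReal.ofReal m := by gcongr
    _ = ENNReal.ofReal (50 * m / √γ) := by
        rw [← ENNReal.ofReal_mul (by positivity), div_mul_eq_mul_div]

lemma ofReal_sqrt_two_mul_mul_le (γ m : ℝ) (k : ℕ) (S : ℝ≥0∞) :
    ENNReal.ofReal √(2 * γ) * (25 * (ENNReal.ofReal m * (ENNReal.ofReal √k * S))) ≤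
      ENNReal.ofReal (50 * m * √(γ * k)) * S := by
  have sqrt_two_le : √2 ≤ 2 := by
    rw [Real.sqrt_le_left zero_le_two]
    norm_num
  have coeff_le : √(2 * γ) * 25 * √k ≤ 50 * √(γ * k) := by
    rw [Real.sqrt_mul zero_le_two, Real.sqrt_mul' γ k.cast_nonneg]
    calc √2 * √γ * 25 * √k = 25 * √2 * (√γ * √k) := by ring
      _ ≤ 50 * (√γ * √k) := by gcongr; linarith
  calc ENNReal.ofReal √(2 * γ) * (25 * (ENNReal.ofReal m * (ENNReal.ofReal √k * S)))
    _ = ENNReal.ofReal (√(2 * γ) * 25 * √k) * ENNReal.ofReal m * S := by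
        rw [ENNReal.ofReal_mul (by positivity), ENNReal.ofReal_mul (by positivity),
          ENNReal.ofReal_ofNat]
        ring
    _ ≤ ENNReal.ofReal (50 * √(γ * k)) * ENNReal.ofReal m * S := by gcongr
    _ = ENNReal.ofReal (50 * m * √(γ * k)) * S := by
        rw [← ENNReal.ofReal_mul (by positivity), mul_right_comm]

theorem statement9_general [CompleteSpace Y] {q : ℝ} (hq : 1 ≤ q) (hn : 0 < n) (ν : Measure 𝔼)
    [IsZeroOrProbabilityMeasure ν] {m : ℝ} (hm : MartCotypeBound q Y m) {γ : ℝ} (hγ : 0 < γ)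
    {f : 𝔼 → Y} (hf : ContDiff ℝ 2 f) (hf_supp : HasCompactSupport f) :
    (∫⁻ x, ∫⁻ t in Ioi (0 : ℝ),
        (∫⁻ z, ‖f (x + t • z) - taylor1 (heat (γ * t ^ 2) f) x (x + t • z)‖ₑ ^ q ∂ν) /
          ENNReal.ofReal (t ^ (q + 1))) ^ (1 / q) ≤
      ENNReal.ofReal (50 * m / √γ) * (∫⁻ z, ENNReal.ofReal (‖z‖ ^ q) *
          eLpNorm (dirDeriv z f) (ENNReal.ofReal q) volume ^ q ∂ν) ^ (1 / q) +
      ENNReal.ofReal (50 * m * √(γ * n)) *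
        ⨍⁻ σ : sphere (0 : 𝔼) 1, eLpNorm (dirDeriv (σ : 𝔼) f) (ENNReal.ofReal q) volume
          ∂volume.toSphere := by
  have hq0 : 0 < q := by linarith
  have f_bdd : IsBddC1 f := .of_hasCompactSupport (hf.of_le one_le_two) hf_supp
  have eLpNorm_dirDeriv (z : 𝔼) : eLpNorm (dirDeriv z f) (ENNReal.ofReal q) volume =
      eLpNorm' (fun y => fderiv ℝ f y z) q volume := by
    rw [eLpNorm_ofReal_eq_eLpNorm' hq0, dirDeriv_eq_fderiv_apply]
  have ofReal_norm_rpow (z : 𝔼) : ENNReal.ofReal (‖z‖ ^ q) = ENNReal.ofReal ‖z‖ ^ q :=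
    (ENNReal.ofReal_rpow_of_nonneg (norm_nonneg z) hq0.le).symm
  have error_eq (x : 𝔼) : ∫⁻ t in Ioi (0 : ℝ),
      (∫⁻ z, ‖f (x + t • z) - taylor1 (heat (γ * t ^ 2) f) x (x + t • z)‖ₑ ^ q ∂ν) /
        ENNReal.ofReal (t ^ (q + 1)) =
      ∫⁻ t in Ioi (0 : ℝ), (∫⁻ z, ‖gaussianTaylorError f (√(2 * γ) * t) (t • z) x‖ₑ ^ q ∂ν) /
        ENNReal.ofReal (t ^ (q + 1)) :=
    setLIntegral_congr_fun measurableSet_Ioi fun t ht => by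
      simp only [sub_taylor1_heat_eq_gaussianTaylorError hγ ht]
  simp only [error_eq, eLpNorm_dirDeriv, ofReal_norm_rpow,
    ← ENNReal.mul_rpow_of_nonneg _ _ hq0.le]
  refine (hm.lintegral_gaussianTaylorError_rpow_le hf hf_supp ν (by positivity) hq).trans ?_
  simp only [eLpNorm', enorm_eq_self]
  gcongr ?_ * _ + ?_
  · exact ofReal_inv_sqrt_two_mul_mul_le hγ m
  · exact (mul_le_mul_right (mul_le_mul_right (mul_le_mul_right
      (gaussianGradNorm_le_laverage_sphere hn f_bdd hq0) _) _) _).trans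
      (ofReal_sqrt_two_mul_mul_le γ m n _)

end MainTheorem

/-- **Theorem (Sobolev-type Dorronsoro estimate via the heat semigroup).** -/
theorem statement9 :
    ∃ C : ℝ, 0 < C ∧
      ∀ (q : ℝ), 2 ≤ q → ∀ (n : ℕ), 0 < n →
      ∀ (N : EuclideanSpace ℝ (Fin n) → ℝ), IsNorm N →
      ∀ (Y : Type u) [NormedAddCommGroup Y] [NormedSpace ℝ Y] [CompleteSpace Y],
      ∀ m : ℝ, 0 ≤ m → MartCotypeBound q Y m →
      ∀ γ : ℝ, 0 < γ →
      ∀ f : EuclideanSpace ℝ (Fin n) → Y, ContDiff ℝ (⊤ : ℕ∞) f → HasCompactSupport f →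
        (∫⁻ x, ∫⁻ t in Set.Ioi (0 : ℝ),
            ((∫⁻ y in {y : EuclideanSpace ℝ (Fin n) | N (y - x) ≤ t},
                (‖f y - taylor1 (heat (γ * t ^ 2) f) x y‖₊ : ℝ≥0∞) ^ q)
              / volume {y : EuclideanSpace ℝ (Fin n) | N (y - x) ≤ t})
              / ENNReal.ofReal (t ^ (q + 1))) ^ (1 / q)
          ≤ ENNReal.ofReal (C * m / Real.sqrt γ) *
              (((∫⁻ x in {x : EuclideanSpace ℝ (Fin n) | N x ≤ 1},
                  ENNReal.ofReal (‖x‖ ^ q) *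
                    eLpNorm (dirDeriv x f) (ENNReal.ofReal q) volume ^ q)
                / volume {x : EuclideanSpace ℝ (Fin n) | N x ≤ 1}) ^ (1 / q))
            + ENNReal.ofReal (C * m * Real.sqrt (γ * n)) *
                ((∫⁻ σ : sphere (0 : EuclideanSpace ℝ (Fin n)) 1,
                    eLpNorm (dirDeriv (σ : EuclideanSpace ℝ (Fin n)) f)
                      (ENNReal.ofReal q) volume
                    ∂((volume : Measure (EuclideanSpace ℝ (Fin n))).toSphere))
                  / (volume : Measure (EuclideanSpace ℝ (Fin n))).toSphere Set.univ) := by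
  refine ⟨50, by norm_num, fun q hq n hn N hN Y _ _ _ m _ hm γ hγ f hf hf_supp => ?_⟩
  simpa only [← enorm_eq_nnnorm, lintegral_Ioi_sublevel_average_eq volume hN.2.1, lintegral_cond,
    laverage_eq] using statement9_general (one_le_two.trans hq) hn
      (ProbabilityTheory.cond volume {x | N x ≤ 1}) hm hγ (contDiff_infty.1 hf 2) hf_supp
end
end

section
/- Fix p,q ∈ (0,∞) and n ∈ ℕ. Let (X,‖·‖_X) be an n-dimensional normed space and let |·| be a Hilbertian norm on X, identifying X with ℝ^n. Then I_q(X)·M_p(X) ≥ (n/(n+q))^{1/q}. -/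
open MeasureTheory Metric Set ENNReal

noncomputable section

/-- The quantity `M_p(X) = (⨍_{S^{n-1}} ‖σ‖_X^p dσ)^{1/p}` (normalized surface measure). -/
def MpX {n : ℕ} (p : ℝ) (N : EuclideanSpace ℝ (Fin n) → ℝ) : ℝ :=
  (⨍ σ : sphere (0 : EuclideanSpace ℝ (Fin n)) 1, N σ ^ p
    ∂((volume : Measure (EuclideanSpace ℝ (Fin n))).toSphere)) ^ (1 / p)

/-- The quantity `I_q(X) = (⨍_{B_X} |x|^q dx)^{1/q}`. -/
def IqX {n : ℕ} (q : ℝ) (N : EuclideanSpace ℝ (Fin n) → ℝ) : ℝ :=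
  (⨍ x in {x : EuclideanSpace ℝ (Fin n) | N x ≤ 1}, ‖x‖ ^ q) ^ (1 / q)

/-!
In polar coordinates, for `N` positively homogeneous on a space of dimension `n`,
`I_q(X)^q = n / (n + q) * ((⨍ N ^ (-(n + q))) / ⨍ N ^ (-n))`, the averages being over the sphere,
so the bound is about moments of `N` on the sphere. By Hölder, `φ s = log ⨍ N ^ s` is convex, and
`φ 0 = 0`. Hence the slope of `φ` between `-(n + q)` and `-n` is at most its slope between `0` and
`p`, that is, `(φ (-n) - φ (-(n + q))) / q ≤ φ p / p`.
-/

section CumulantConvexity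

open ProbabilityTheory

variable {Ω : Type*} [MeasurableSpace Ω] {μ : Measure Ω} {X : Ω → ℝ} {s t a b : ℝ}

lemma mgf_add_le_rpow_mul_rpow (hs : s ∈ integrableExpSet X μ) (ht : t ∈ integrableExpSet X μ)
    (ha : 0 ≤ a) (hb : 0 ≤ b) (hab : a + b = 1) :
    mgf X μ (a * s + b * t) ≤ mgf X μ s ^ a * mgf X μ t ^ b := by
  have ofReal_mgf {u : ℝ} (hu : u ∈ integrableExpSet X μ) :
      ENNReal.ofReal (mgf X μ u) = ∫⁻ ω, ENNReal.ofReal (Real.exp (u * X ω)) ∂μ :=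
    ofReal_integral_eq_lintegral_ofReal hu (.of_forall fun _ ↦ (Real.exp_pos _).le)
  have hst : a * s + b * t ∈ integrableExpSet X μ := convex_integrableExpSet hs ht ha hb hab
  have exp_split (ω : Ω) : ENNReal.ofReal (Real.exp ((a * s + b * t) * X ω)) =
      ENNReal.ofReal (Real.exp (s * X ω)) ^ a * ENNReal.ofReal (Real.exp (t * X ω)) ^ b := by
    rw [ENNReal.ofReal_rpow_of_nonneg (Real.exp_pos _).le ha,
      ENNReal.ofReal_rpow_of_nonneg (Real.exp_pos _).le hb,
      ← ENNReal.ofReal_mul (by positivity), ← Real.exp_mul, ← Real.exp_mul, ← Real.exp_add]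
    ring_nf
  have h_nonneg : 0 ≤ mgf X μ s ^ a * mgf X μ t ^ b :=
    mul_nonneg (Real.rpow_nonneg mgf_nonneg _) (Real.rpow_nonneg mgf_nonneg _)
  rw [← ENNReal.ofReal_le_ofReal_iff h_nonneg, ENNReal.ofReal_mul (Real.rpow_nonneg mgf_nonneg _),
    ← ENNReal.ofReal_rpow_of_nonneg mgf_nonneg ha, ← ENNReal.ofReal_rpow_of_nonneg mgf_nonneg hb,
    ofReal_mgf hs, ofReal_mgf ht, ofReal_mgf hst]
  simp only [exp_split]
  exact ENNReal.lintegral_mul_norm_pow_le hs.1.aemeasurable.ennreal_ofReal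
    ht.1.aemeasurable.ennreal_ofReal ha hb hab

lemma convexOn_cgf : ConvexOn ℝ (integrableExpSet X μ) (cgf X μ) := by
  obtain rfl | hμ := eq_or_ne μ 0
  · rw [cgf_zero_measure]
    exact convexOn_const 0 convex_integrableExpSet
  refine ⟨convex_integrableExpSet, fun s hs t ht a b ha hb hab ↦ ?_⟩
  have hmgf_s := mgf_pos' hμ hs
  have hmgf_t := mgf_pos' hμ ht
  have hmgf_st := mgf_pos' hμ (convex_integrableExpSet hs ht ha hb hab)
  calc cgf X μ (a • s + b • t)
      ≤ Real.log (mgf X μ s ^ a * mgf X μ t ^ b) :=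
        Real.log_le_log hmgf_st (mgf_add_le_rpow_mul_rpow hs ht ha hb hab)
    _ = a • cgf X μ s + b • cgf X μ t := by
        rw [Real.log_mul (by positivity) (by positivity), Real.log_rpow hmgf_s,
          Real.log_rpow hmgf_t, smul_eq_mul, smul_eq_mul, cgf, cgf]

end CumulantConvexity

lemma slope_le_slope_of_convexOn {𝕜 : Type*} [Field 𝕜] [LinearOrder 𝕜] [IsStrictOrderedRing 𝕜]
    {S : Set 𝕜} {f : 𝕜 → 𝕜} (hf : ConvexOn 𝕜 S f) {x y z w : 𝕜} (hx : x ∈ S) (hy : y ∈ S)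
    (hz : z ∈ S) (hw : w ∈ S) (hxy : x ≠ y) (hxz : x ≠ z) (hzw : z ≠ w) (hyz : y ≤ z)
    (hxw : x ≤ w) :
    slope f x y ≤ slope f z w :=
  calc slope f x y ≤ slope f x z := hf.slope_mono hx ⟨hy, hxy.symm⟩ ⟨hz, hxz.symm⟩ hyz
    _ = slope f z x := slope_comm f x z
    _ ≤ slope f z w := hf.slope_mono hz ⟨hx, hxz⟩ ⟨hw, hzw.symm⟩ hxw

section Moments

open ProbabilityTheory

variable {Ω : Type*} [MeasurableSpace Ω] {μ : Measure Ω} [IsFiniteMeasure μ] [NeZero μ]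
  {f : Ω → ℝ} {a b p : ℝ}

lemma one_le_average_rpow_div_average_rpow_mul_average_rpow (hf : ∀ ω, 0 < f ω)
    (hfa : Integrable (fun ω ↦ f ω ^ a) μ) (hfb : Integrable (fun ω ↦ f ω ^ b) μ)
    (hfp : Integrable (fun ω ↦ f ω ^ p) μ) (hab : a ≠ b) (ha : a ≠ 0) (hp : p ≠ 0) (hb : b ≤ 0)
    (hap : a ≤ p) :
    1 ≤ ((⨍ ω, f ω ^ a ∂μ) / ⨍ ω, f ω ^ b ∂μ) ^ (1 / (b - a)) *
      (⨍ ω, f ω ^ p ∂μ) ^ (1 / p) := by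
  set X : Ω → ℝ := fun ω ↦ Real.log (f ω)
  set ν : Measure Ω := (μ univ)⁻¹ • μ
  have rpow_eq_exp (s : ℝ) : (fun ω ↦ f ω ^ s) = fun ω ↦ Real.exp (s * X ω) := by
    funext ω
    rw [Real.rpow_def_of_pos (hf ω), mul_comm]
  have mem_integrableExpSet {s : ℝ} (hs : Integrable (fun ω ↦ f ω ^ s) μ) :
      s ∈ integrableExpSet X ν := by
    rw [rpow_eq_exp] at hs
    exact hs.smul_measure (ENNReal.inv_ne_top.2 (NeZero.ne _))
  have average_eq_exp_cgf {s : ℝ} (hs : Integrable (fun ω ↦ f ω ^ s) μ) :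
      ⨍ ω, f ω ^ s ∂μ = Real.exp (cgf X ν s) := by
    rw [exp_cgf (mem_integrableExpSet hs), rpow_eq_exp]
    rfl
  have slope_le : slope (cgf X ν) a b ≤ slope (cgf X ν) 0 p :=
    slope_le_slope_of_convexOn convexOn_cgf (mem_integrableExpSet hfa) (mem_integrableExpSet hfb)
      (by simp [integrableExpSet]) (mem_integrableExpSet hfp) hab ha hp.symm hb hap
  rw [slope_def_field, slope_def_field, cgf_zero, sub_zero, sub_zero] at slope_le
  rw [average_eq_exp_cgf hfa, average_eq_exp_cgf hfb, average_eq_exp_cgf hfp, ← Real.exp_sub,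
    ← Real.exp_mul, ← Real.exp_mul, ← Real.exp_add, Real.one_le_exp_iff]
  calc 0 ≤ cgf X ν p / p - (cgf X ν b - cgf X ν a) / (b - a) := sub_nonneg.2 slope_le
    _ = (cgf X ν a - cgf X ν b) * (1 / (b - a)) + cgf X ν p * (1 / p) := by ring

end Moments

/-- The gauges of star bodies: continuous functions that are positive away from the origin and
positively homogeneous. Neither symmetry nor the triangle inequality is part of the notion, so that
it covers norms but also gauges of non-convex bodies. -/
structure IsStarGauge {E : Type*} [TopologicalSpace E] [AddCommGroup E] [Module ℝ E]
    (N : E → ℝ) : Prop where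
  continuous : Continuous N
  pos : ∀ x ≠ 0, 0 < N x
  smul : ∀ r > 0, ∀ x, N (r • x) = r * N x

lemma lintegral_Ioc_rpow {b t : ℝ} (hb : 0 ≤ b) (ht : -1 < t) :
    ∫⁻ r in Ioc 0 b, ENNReal.ofReal (r ^ t) = ENNReal.ofReal (b ^ (t + 1) / (t + 1)) := by
  rw [← ofReal_integral_eq_lintegral_ofReal (intervalIntegral.intervalIntegrable_rpow' ht).1
      (ae_restrict_of_forall_mem measurableSet_Ioc fun r hr ↦ Real.rpow_nonneg hr.1.le t),
    ← intervalIntegral.integral_of_le hb, integral_rpow (.inl ht),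
    Real.zero_rpow (by linarith), sub_zero]

section Sphere

variable {E : Type*} [NormedAddCommGroup E] [NormedSpace ℝ E] {N : E → ℝ}

lemma IsStarGauge.pos_sphere (hN : IsStarGauge N) (σ : sphere (0 : E) 1) : 0 < N σ :=
  hN.pos σ (ne_zero_of_mem_unit_sphere σ)

lemma IsStarGauge.lintegral_Ioi_indicator_sublevel (hN : IsStarGauge N) (σ : sphere (0 : E) 1)
    {n : ℕ} (hn : 1 ≤ n) {s : ℝ} (hs : 0 < n + s) :
    ∫⁻ r in Ioi (0 : ℝ), ENNReal.ofReal (r ^ (n - 1)) *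
        {x | N x ≤ 1}.indicator (fun x ↦ ENNReal.ofReal (‖x‖ ^ s)) (r • (σ : E)) =
      ENNReal.ofReal (N σ ^ (-(n + s)) / (n + s)) := by
  have hσ : 0 < N σ := hN.pos_sphere σ
  have mem_sublevel {r : ℝ} (hr : 0 < r) : r • (σ : E) ∈ {x | N x ≤ 1} ↔ r ∈ Iic (N σ)⁻¹ := by
    rw [mem_ofPred_eq, hN.smul r hr, ← le_div_iff₀ hσ, one_div, mem_Iic]
  have integrand_eq : ∀ r ∈ Ioi (0 : ℝ), ENNReal.ofReal (r ^ (n - 1)) *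
        {x | N x ≤ 1}.indicator (fun x ↦ ENNReal.ofReal (‖x‖ ^ s)) (r • (σ : E)) =
      (Iic (N σ)⁻¹).indicator (fun r ↦ ENNReal.ofReal (r ^ (n + s - 1))) r := by
    intro r (hr : 0 < r)
    by_cases hrσ : r ∈ Iic (N σ)⁻¹
    · rw [indicator_of_mem ((mem_sublevel hr).2 hrσ), indicator_of_mem hrσ,
        ← ENNReal.ofReal_mul (by positivity), norm_smul, norm_eq_of_mem_sphere, mul_one,
        Real.norm_of_nonneg hr.le, ← Real.rpow_natCast, ← Real.rpow_add hr, Nat.cast_pred hn]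
      ring_nf
    · rw [indicator_of_notMem (mt (mem_sublevel hr).1 hrσ), indicator_of_notMem hrσ, mul_zero]
  rw [setLIntegral_congr_fun measurableSet_Ioi integrand_eq,
    setLIntegral_indicator measurableSet_Iic, inter_comm, Ioi_inter_Iic,
    lintegral_Ioc_rpow (by positivity) (by linarith), sub_add_cancel, Real.inv_rpow hσ.le,
    Real.rpow_neg hσ.le]

variable [FiniteDimensional ℝ E] [MeasurableSpace E] [BorelSpace E] (μ : Measure E)
  [μ.IsAddHaarMeasure]

local notation "dim" => Module.finrank ℝ

lemma IsStarGauge.integrable_rpow_sphere (hN : IsStarGauge N) (s : ℝ) :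
    Integrable (fun σ : sphere (0 : E) 1 ↦ N σ ^ s) μ.toSphere :=
  ((hN.continuous.comp continuous_subtype_val).rpow_const
    fun σ ↦ .inl (hN.pos_sphere σ).ne').integrable_of_hasCompactSupport (.of_compactSpace _)

lemma lintegral_eq_lintegral_sphere_lintegral_Ioi [Nontrivial E] {f : E → ℝ≥0∞}
    (hf : Measurable f) :
    ∫⁻ x, f x ∂μ = ∫⁻ σ : sphere (0 : E) 1,
      (∫⁻ r in Ioi (0 : ℝ), ENNReal.ofReal (r ^ (dim E - 1)) * f (r • (σ : E))) ∂μ.toSphere := by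
  have hpolar := μ.measurePreserving_homeomorphUnitSphereProd.symm
    (homeomorphUnitSphereProd E).toMeasurableEquiv
  have hf_polar : Measurable fun z : sphere (0 : E) 1 × Ioi (0 : ℝ) ↦ f (z.2.1 • z.1.1) := by
    fun_prop
  calc ∫⁻ x, f x ∂μ = ∫⁻ x : ({0}ᶜ : Set E), f x ∂μ.comap (↑) := by
        rw [lintegral_subtype_comap (measurableSet_singleton _).compl, restrict_compl_singleton]
    _ = ∫⁻ z : sphere (0 : E) 1 × Ioi (0 : ℝ), f (z.2.1 • z.1.1)
          ∂μ.toSphere.prod (.volumeIoiPow (dim E - 1)) :=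
        (hpolar.lintegral_comp (hf.comp measurable_subtype_coe)).symm
    _ = ∫⁻ σ : sphere (0 : E) 1, (∫⁻ r : Ioi (0 : ℝ), f (r.1 • (σ : E))
          ∂.volumeIoiPow (dim E - 1)) ∂μ.toSphere :=
        lintegral_prod _ hf_polar.aemeasurable
    _ = _ := by
        refine lintegral_congr fun σ ↦ ?_
        rw [Measure.volumeIoiPow, lintegral_withDensity_eq_lintegral_mul _ (by fun_prop)
          (by fun_prop), ← lintegral_subtype_comap measurableSet_Ioi]
        rfl

lemma IsStarGauge.setIntegral_norm_rpow_sublevel [Nontrivial E] (hN : IsStarGauge N) {s : ℝ}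
    (hs : 0 < dim E + s) :
    ∫ x in {x | N x ≤ 1}, ‖x‖ ^ s ∂μ =
      (∫ σ : sphere (0 : E) 1, N σ ^ (-(dim E + s)) ∂μ.toSphere) / (dim E + s) := by
  have hB : MeasurableSet {x | N x ≤ 1} :=
    (isClosed_le hN.continuous continuous_const).measurableSet
  have hnorm : Measurable fun x : E ↦ ‖x‖ ^ s := by fun_prop
  have h_nonneg (σ : sphere (0 : E) 1) : 0 ≤ N σ ^ (-(dim E + s)) / (dim E + s) :=
    div_nonneg (Real.rpow_nonneg (hN.pos_sphere σ).le _) hs.le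
  rw [← integral_div, integral_eq_lintegral_of_nonneg_ae (.of_forall fun _ ↦ by positivity)
      hnorm.aestronglyMeasurable,
    integral_eq_lintegral_of_nonneg_ae (.of_forall h_nonneg)
      ((hN.integrable_rpow_sphere μ _).div_const _).aestronglyMeasurable,
    ← lintegral_indicator hB,
    lintegral_eq_lintegral_sphere_lintegral_Ioi μ (hnorm.ennreal_ofReal.indicator hB)]
  simp only [hN.lintegral_Ioi_indicator_sublevel _ Module.finrank_pos hs]

lemma IsStarGauge.setAverage_norm_rpow_sublevel [Nontrivial E] (hN : IsStarGauge N) {s : ℝ}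
    (hs : 0 < dim E + s) :
    ⨍ x in {x | N x ≤ 1}, ‖x‖ ^ s ∂μ =
      dim E / (dim E + s) * ((⨍ σ : sphere (0 : E) 1, N σ ^ (-(dim E + s)) ∂μ.toSphere) /
        ⨍ σ : sphere (0 : E) 1, N σ ^ (-dim E : ℝ) ∂μ.toSphere) := by
  have hdim : (0 : ℝ) < dim E + 0 := by simpa using Module.finrank_pos (R := ℝ) (M := E)
  have hvol := hN.setIntegral_norm_rpow_sublevel μ hdim
  simp only [Real.rpow_zero, add_zero, setIntegral_const, smul_eq_mul, mul_one] at hvol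
  have hsphere : μ.toSphere.real univ ≠ 0 := by
    have : NeZero μ.toSphere := ⟨μ.toSphere_ne_zero⟩
    exact measureReal_univ_ne_zero
  rw [setAverage_eq, average_eq, average_eq, hN.setIntegral_norm_rpow_sublevel μ hs, hvol]
  simp only [smul_eq_mul]
  rw [mul_div_mul_left _ _ (inv_ne_zero hsphere)]
  field_simp

theorem statement17_general [Nontrivial E] (hN : IsStarGauge N) {p q : ℝ} (hp : p ≠ 0)
    (hq : q ≠ 0) (hdimq : 0 < dim E + q) (hpq : -(dim E + q) ≤ p) :
    (dim E / (dim E + q)) ^ (1 / q) ≤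
      (⨍ x in {x | N x ≤ 1}, ‖x‖ ^ q ∂μ) ^ (1 / q) *
        (⨍ σ : sphere (0 : E) 1, N σ ^ p ∂μ.toSphere) ^ (1 / p) := by
  have : NeZero μ.toSphere := ⟨μ.toSphere_ne_zero⟩
  have average_nonneg (s : ℝ) : 0 ≤ ⨍ σ : sphere (0 : E) 1, N σ ^ s ∂μ.toSphere :=
    integral_nonneg fun σ ↦ Real.rpow_nonneg (hN.pos_sphere σ).le s
  have moments := one_le_average_rpow_div_average_rpow_mul_average_rpow hN.pos_sphere
    (hN.integrable_rpow_sphere μ (-(dim E + q))) (hN.integrable_rpow_sphere μ (-dim E))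
    (hN.integrable_rpow_sphere μ p) (by simpa using hq) (by linarith) hp (by simp) hpq
  rw [show -(dim E : ℝ) - -(dim E + q) = q by ring] at moments
  rw [hN.setAverage_norm_rpow_sublevel μ hdimq,
    Real.mul_rpow (by positivity) (div_nonneg (average_nonneg _) (average_nonneg _)), mul_assoc]
  exact le_mul_of_one_le_right (by positivity) moments

end Sphere

lemma IsNorm.isStarGauge {E : Type*} [NormedAddCommGroup E] [NormedSpace ℝ E]
    [FiniteDimensional ℝ E] {N : E → ℝ} (hN : IsNorm N) : IsStarGauge N := by
  obtain ⟨eq_zero, map_smul, add_le⟩ := hN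
  let S : Seminorm ℝ E := .of N add_le map_smul
  exact
    { continuous := continuousOn_univ.1 (S.convexOn.continuousOn isOpen_univ)
      pos := fun x hx ↦ (apply_nonneg S x).lt_of_ne fun h ↦ hx (eq_zero x h.symm)
      smul := fun r hr x ↦ by rw [map_smul, abs_of_pos hr] }

/-- **Corollary (lower bound on `I_q(X)·M_p(X)`).** -/
theorem statement17 (p q : ℝ) (hp : 0 < p) (hq : 0 < q) (n : ℕ) (hn : 0 < n)
    (N : EuclideanSpace ℝ (Fin n) → ℝ) (hN : IsNorm N) :
    ((n : ℝ) / ((n : ℝ) + q)) ^ (1 / q) ≤ IqX q N * MpX p N := by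
  have : Nonempty (Fin n) := ⟨⟨0, hn⟩⟩
  simpa [IqX, MpX] using statement17_general volume hN.isStarGauge hp.ne' hq.ne'
    (by positivity) (by rw [finrank_euclideanSpace_fin]; linarith [n.cast_nonneg (α := ℝ)])
end
end
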